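/- Let ω > 0 and q > p > 1 be real numbers, let n ≥ 1 be a natural number, and let f(u) = -ω·u + u^p - u^q, F(u) = -ω·u²/2 + u^{p+1}/(p+1) - u^{q+1}/(q+1). If there exists u > 0 with F(u) > 0, then the boundary value problem u''(r) + ((n-1)/r)·u'(r) + f(u(r)) = 0 for r > 0, u'(0) = 0, lim_{r→∞} u(r) = 0 has exactly one positive solution. -/

import Mathlib

open Filter

/-- The double power nonlinearity `f(u) = -ω·u + u^p - u^q` (real powers). -/
noncomputable def f (ω p q u : ℝ) : ℝ := -ω * u + u ^ p - u ^ q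

/-- The primitive `F(u) = -ω·u²/2 + u^(p+1)/(p+1) - u^(q+1)/(q+1)`. -/
noncomputable def F (ω p q u : ℝ) : ℝ :=
  -ω * u ^ 2 / 2 + u ^ (p + 1) / (p + 1) - u ^ (q + 1) / (q + 1)

/-- `u` is a positive solution of the radial boundary value problem
`u'' + ((n-1)/r) u' + f(u) = 0` on `(0,∞)`, `u'(0) = 0`, `u(r) → 0` as `r → ∞`. -/
def IsPositiveSolution (n : ℕ) (f : ℝ → ℝ) (u : ℝ → ℝ) : Prop :=
  ContDiffOn ℝ 2 u (Set.Ici 0) ∧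
  (∀ r : ℝ, 0 ≤ r → 0 < u r) ∧
  (∀ r : ℝ, 0 < r →
    iteratedDerivWithin 2 u (Set.Ici 0) r
      + ((n : ℝ) - 1) / r * derivWithin u (Set.Ici 0) r + f (u r) = 0) ∧
  derivWithin u (Set.Ici 0) 0 = 0 ∧
  Tendsto u atTop (nhds 0)

/-!
Truncate `f` above its largest zero `c` and parametrize the solutions by their initial value
`α ∈ (0, c)`. The values whose solution becomes negative, and those whose solution falls into the
potential well with negative energy, form disjoint nonempty open sets; since `(0, c)` is connected,
some value lies in neither, and its solution is a ground state.

For uniqueness, let `x` be a ground state and `φ` the solution of the equation linearized at `x`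
with `φ 0 = 1`. Comparison with the translation mode `x'` shows that `φ` has a first zero `r₀`.
Pohozaev's identity makes `θ = -r x' / x` strictly increasing, so the dilation mode `r x' + l x`
with `l = θ r₀` vanishes only at `r₀`. As `l (u f'(u) - f u) - 2 f u` changes sign only once, the
Wronskian of this mode with `φ` shows that `φ` stays negative beyond `r₀` and is decreasing at
arbitrarily large radii. Hence solutions starting slightly above a ground state become negative,
whereas those starting slightly below do not. Two ground states are then impossible: above the
smaller initial value there are values of solutions becoming negative, so the next value whose
solution stays nonnegative would have such values immediately to its left.
-/

open Filter Set Topology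
open scoped NNReal BoundedContinuousFunction

/-! ### Calculus on an interval -/

section Calculus

variable {φ φ' : ℝ → ℝ} {a b : ℝ}

lemma le_of_hasDerivAt_nonneg (hab : a ≤ b) (hc : ContinuousOn φ (Icc a b))
    (hd : ∀ t ∈ Ioo a b, HasDerivAt φ (φ' t) t) (h : ∀ t ∈ Ioo a b, 0 ≤ φ' t) : φ a ≤ φ b := by
  rw [← interior_Icc] at hd h
  exact monotoneOn_of_hasDerivWithinAt_nonneg (convex_Icc a b) hc
    (fun t ht => (hd t ht).hasDerivWithinAt) h (left_mem_Icc.2 hab) (right_mem_Icc.2 hab) hab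

lemma lt_of_hasDerivAt_pos (hab : a < b) (hc : ContinuousOn φ (Icc a b))
    (hd : ∀ t ∈ Ioo a b, HasDerivAt φ (φ' t) t) (h : ∀ t ∈ Ioo a b, 0 < φ' t) : φ a < φ b := by
  rw [← interior_Icc] at hd h
  exact strictMonoOn_of_hasDerivWithinAt_pos (convex_Icc a b) hc
    (fun t ht => (hd t ht).hasDerivWithinAt) h (left_mem_Icc.2 hab.le) (right_mem_Icc.2 hab.le) hab

lemma le_of_hasDerivAt_nonpos (hab : a ≤ b) (hc : ContinuousOn φ (Icc a b))
    (hd : ∀ t ∈ Ioo a b, HasDerivAt φ (φ' t) t) (h : ∀ t ∈ Ioo a b, φ' t ≤ 0) : φ b ≤ φ a := by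
  rw [← interior_Icc] at hd h
  exact antitoneOn_of_hasDerivWithinAt_nonpos (convex_Icc a b) hc
    (fun t ht => (hd t ht).hasDerivWithinAt) h (left_mem_Icc.2 hab) (right_mem_Icc.2 hab) hab

lemma lt_of_hasDerivAt_neg (hab : a < b) (hc : ContinuousOn φ (Icc a b))
    (hd : ∀ t ∈ Ioo a b, HasDerivAt φ (φ' t) t) (h : ∀ t ∈ Ioo a b, φ' t < 0) : φ b < φ a := by
  rw [← interior_Icc] at hd h
  exact strictAntiOn_of_hasDerivWithinAt_neg (convex_Icc a b) hc
    (fun t ht => (hd t ht).hasDerivWithinAt) h (left_mem_Icc.2 hab.le) (right_mem_Icc.2 hab.le) hab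

lemma hasDerivAt_exp_mul (K t : ℝ) :
    HasDerivAt (fun t => Real.exp (K * t)) (Real.exp (K * t) * K) t := by
  simpa using ((hasDerivAt_id t).const_mul K).exp

lemma le_exp_mul_of_hasDerivAt_le {K : ℝ} (hab : a ≤ b) (hc : ContinuousOn φ (Icc a b))
    (hd : ∀ t ∈ Ioo a b, HasDerivAt φ (φ' t) t) (h : ∀ t ∈ Ioo a b, φ' t ≤ K * φ t) :
    φ b ≤ Real.exp (K * (b - a)) * φ a := by
  have hanti := le_of_hasDerivAt_nonpos (φ := fun t => Real.exp (-K * t) * φ t) hab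
    ((by fun_prop : Continuous fun t => Real.exp (-K * t)).continuousOn.mul hc)
    (fun t ht => (hasDerivAt_exp_mul (-K) t).mul (hd t ht)) (fun t ht => by
      nlinarith [h t ht, Real.exp_pos (-K * t)])
  calc φ b = Real.exp (K * b) * (Real.exp (-K * b) * φ b) := by
        rw [← mul_assoc, ← Real.exp_add]; simp
    _ ≤ Real.exp (K * b) * (Real.exp (-K * a) * φ a) := by gcongr
    _ = Real.exp (K * (b - a)) * φ a := by
        rw [← mul_assoc, ← Real.exp_add]; ring_nf

lemma exists_first_zero (hab : a ≤ b) (hc : ContinuousOn φ (Icc a b)) (ha : φ a < 0)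
    (hb : 0 ≤ φ b) : ∃ c ∈ Ioc a b, φ c = 0 ∧ ∀ t ∈ Ico a c, φ t < 0 := by
  set S := Icc a b ∩ φ ⁻¹' {0}
  have hclosed : IsClosed S := hc.preimage_isClosed_of_isClosed isClosed_Icc isClosed_singleton
  have hbdd : BddBelow S := ⟨a, fun t ht => ht.1.1⟩
  obtain ⟨d, hd, hd0⟩ := intermediate_value_Icc hab hc ⟨ha.le, hb⟩
  obtain ⟨hmem, hzero⟩ := hclosed.csInf_mem ⟨d, hd, hd0⟩ hbdd
  refine ⟨sInf S, ⟨hmem.1.lt_of_ne fun h => ?_, hmem.2⟩, hzero, fun t ht => ?_⟩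
  · rw [h] at ha
    exact ha.ne hzero
  · by_contra! hpos
    have htb : t ≤ b := ht.2.le.trans hmem.2
    obtain ⟨e, he, he0⟩ :=
      intermediate_value_Icc ht.1 (hc.mono (Icc_subset_Icc_right htb)) ⟨ha.le, hpos⟩
    exact (csInf_le hbdd ⟨⟨he.1, he.2.trans htb⟩, he0⟩).not_gt (he.2.trans_lt ht.2)

lemma eq_zero_of_tendsto_of_hasDerivAt_tendsto {l d : ℝ}
    (hd : ∀ r, 0 < r → HasDerivAt φ (φ' r) r) (hl : Tendsto φ atTop (𝓝 l))
    (hl' : Tendsto φ' atTop (𝓝 d)) : d = 0 := by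
  have hdiff : Tendsto (fun r => φ (r + 1) - φ r) atTop (𝓝 0) := by
    simpa using (hl.comp (tendsto_atTop_add_const_right _ 1 tendsto_id)).sub hl
  have hslope : ∀ r : ℝ, ∃ s, r ≤ s ∧ (0 < r → φ' s = φ (r + 1) - φ r) := by
    intro r
    by_cases hr : 0 < r
    · obtain ⟨s, hs, he⟩ := exists_hasDerivAt_eq_slope φ φ' (lt_add_one r)
        (fun t ht => (hd t (hr.trans_le ht.1)).continuousAt.continuousWithinAt)
        (fun t ht => hd t (hr.trans ht.1))
      exact ⟨s, hs.1.le, fun _ => by simpa using he⟩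
    · exact ⟨r, le_rfl, fun h => absurd h hr⟩
  choose s hs hs' using hslope
  refine tendsto_nhds_unique (hl'.comp (tendsto_atTop_mono hs tendsto_id)) (hdiff.congr' ?_)
  filter_upwards [eventually_gt_atTop 0] with r hr using (hs' r hr).symm

lemma hasDerivAt_pow_div (k : ℕ) {r : ℝ} (hr : 0 < r) :
    HasDerivAt (fun r : ℝ => r ^ k) (k / r * r ^ k) r := by
  refine (hasDerivAt_pow k r).congr_deriv ?_
  cases k with
  | zero => simp
  | succ k => field_simp; simp [pow_succ]

end Calculus

/-! ### Radial equations -/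

/-- `x` is a radial solution on `[0, ∞)` of `x'' + (k / r) x' + h = 0`, where `k + 1` is the
dimension, `h` is the source and `y` is the derivative of `x`. Regularity at the singular point
`r = 0` is encoded by continuity of `x` and `y` there and by `y 0 = 0`. -/
structure RadialSolution (k : ℕ) (h x y : ℝ → ℝ) : Prop where
  continuousOn : ContinuousOn x (Ici 0)
  continuousOn_deriv : ContinuousOn y (Ici 0)
  deriv_zero : y 0 = 0
  hasDerivAt : ∀ r, 0 < r → HasDerivAt x (y r) r
  hasDerivAt_deriv : ∀ r, 0 < r → HasDerivAt y (-(k / r) * y r - h r) r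

namespace RadialSolution

variable {k : ℕ} {h x y h₁ x₁ y₁ h₂ x₂ y₂ : ℝ → ℝ}

lemma sub (s₁ : RadialSolution k h₁ x₁ y₁) (s₂ : RadialSolution k h₂ x₂ y₂) :
    RadialSolution k (fun r => h₁ r - h₂ r) (fun r => x₁ r - x₂ r) (fun r => y₁ r - y₂ r) where
  continuousOn := s₁.continuousOn.sub s₂.continuousOn
  continuousOn_deriv := s₁.continuousOn_deriv.sub s₂.continuousOn_deriv
  deriv_zero := by simp [s₁.deriv_zero, s₂.deriv_zero]
  hasDerivAt r hr := (s₁.hasDerivAt r hr).sub (s₂.hasDerivAt r hr)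
  hasDerivAt_deriv r hr :=
    ((s₁.hasDerivAt_deriv r hr).sub (s₂.hasDerivAt_deriv r hr)).congr_deriv (by ring)

lemma const_mul (s : RadialSolution k h x y) (a : ℝ) :
    RadialSolution k (fun r => a * h r) (fun r => a * x r) (fun r => a * y r) where
  continuousOn := continuousOn_const.mul s.continuousOn
  continuousOn_deriv := continuousOn_const.mul s.continuousOn_deriv
  deriv_zero := by simp [s.deriv_zero]
  hasDerivAt r hr := (s.hasDerivAt r hr).const_mul a
  hasDerivAt_deriv r hr := ((s.hasDerivAt_deriv r hr).const_mul a).congr_deriv (by ring)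

lemma congr_source (s : RadialSolution k h₁ x y) (hh : ∀ r, 0 < r → h₁ r = h₂ r) :
    RadialSolution k h₂ x y :=
  { s with hasDerivAt_deriv := fun r hr => hh r hr ▸ s.hasDerivAt_deriv r hr }

variable (s : RadialSolution k h x y)
include s

lemma continuousOn_Icc {a b : ℝ} (ha : 0 ≤ a) : ContinuousOn x (Icc a b) :=
  s.continuousOn.mono fun _ ht => ha.trans ht.1

lemma continuousOn_deriv_Icc {a b : ℝ} (ha : 0 ≤ a) : ContinuousOn y (Icc a b) :=
  s.continuousOn_deriv.mono fun _ ht => ha.trans ht.1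

lemma hasDerivAt_flux {r : ℝ} (hr : 0 < r) :
    HasDerivAt (fun r => r ^ k * y r) (-(r ^ k * h r)) r :=
  ((hasDerivAt_pow_div k hr).mul (s.hasDerivAt_deriv r hr)).congr_deriv (by ring)

lemma continuousOn_flux {a b : ℝ} (ha : 0 ≤ a) : ContinuousOn (fun r => r ^ k * y r) (Icc a b) :=
  (continuous_pow k).continuousOn.mul (s.continuousOn_deriv_Icc ha)

end RadialSolution

lemma two_mul_mul_le_of_abs_le {L η x y h : ℝ} (hL : 0 ≤ L) (hh : |h| ≤ L * |x| + η) :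
    2 * |y * h| ≤ (L + 1) * (x ^ 2 + y ^ 2 + η ^ 2) := by
  have hxy := two_mul_le_add_sq |x| |y|
  have hηy := two_mul_le_add_sq η |y|
  rw [sq_abs] at hηy
  rw [sq_abs, sq_abs] at hxy
  calc 2 * |y * h| = 2 * |y| * |h| := by rw [abs_mul, mul_assoc]
    _ ≤ 2 * |y| * (L * |x| + η) := by gcongr
    _ = L * (2 * |x| * |y|) + 2 * η * |y| := by ring
    _ ≤ L * (x ^ 2 + y ^ 2) + (η ^ 2 + y ^ 2) := by gcongr
    _ ≤ (L + 1) * (x ^ 2 + y ^ 2 + η ^ 2) := by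
      nlinarith [mul_nonneg hL (sq_nonneg η), sq_nonneg x]

namespace RadialSolution

variable {k : ℕ} {h x y : ℝ → ℝ}

lemma sq_add_sq_le (s : RadialSolution k h x y) {L η r : ℝ} (hL : 0 ≤ L) (hr : 0 ≤ r)
    (hh : ∀ t ∈ Icc 0 r, |h t| ≤ L * |x t| + η) :
    x r ^ 2 + y r ^ 2 ≤ Real.exp ((L + 2) * r) * (x 0 ^ 2 + η ^ 2) := by
  have hx := s.continuousOn_Icc (b := r) le_rfl
  have hy := s.continuousOn_deriv_Icc (b := r) le_rfl
  have hgronwall := le_exp_mul_of_hasDerivAt_le (φ := fun t => x t ^ 2 + y t ^ 2 + η ^ 2)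
    (K := L + 2) hr (by fun_prop)
    (fun t ht => (((s.hasDerivAt t ht.1).pow 2).add
      ((s.hasDerivAt_deriv t ht.1).pow 2)).add_const (η ^ 2)) (fun t ht => by
      have hsource := two_mul_mul_le_of_abs_le (y := y t) hL (hh t ⟨ht.1.le, ht.2.le⟩)
      have hfriction : 0 ≤ k / t * y t ^ 2 := by have := ht.1; positivity
      simp only [Nat.cast_ofNat, Nat.add_one_sub_one, pow_one]
      nlinarith [neg_le_abs (y t * h t), sq_nonneg (x t - y t), sq_nonneg η])
  simp only [s.deriv_zero, sub_zero] at hgronwall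
  nlinarith [sq_nonneg η]

lemma eq_zero_of_eq_zero_right (s : RadialSolution k h x y) {L r R : ℝ} (hL : 0 ≤ L) (hr : 0 < r)
    (hrR : r ≤ R) (hh : ∀ t ∈ Ioo r R, |h t| ≤ L * |x t|) (hx : x R = 0) (hy : y R = 0) :
    x r = 0 := by
  have hxc := s.continuousOn_Icc (b := R) hr.le
  have hyc := s.continuousOn_deriv_Icc (b := R) hr.le
  have hgronwall := le_exp_mul_of_hasDerivAt_le
    (φ := fun t => -((t ^ k * x t) ^ 2 + (t ^ k * y t) ^ 2)) (K := -(L + 2)) hrR (by fun_prop)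
    (fun t ht => (((((hasDerivAt_pow_div k (hr.trans ht.1)).mul
      (s.hasDerivAt t (hr.trans ht.1))).pow 2).add
        ((s.hasDerivAt_flux (hr.trans ht.1)).pow 2)).neg)) (fun t ht => by
      have ht0 : 0 < t := hr.trans ht.1
      have hsource := two_mul_mul_le_of_abs_le (y := y t) (η := 0) hL (by simpa using hh t ht)
      have hfriction : 0 ≤ k / t * x t ^ 2 := by positivity
      have hneg : 0 ≤ (L + 2) * (x t ^ 2 + y t ^ 2)
          + (2 * (k / t * x t ^ 2) + 2 * x t * y t - 2 * (y t * h t)) := by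
        nlinarith [le_abs_self (y t * h t), sq_nonneg (x t + y t)]
      have := mul_nonneg (sq_nonneg (t ^ k)) hneg
      simp only [Nat.cast_ofNat, Nat.add_one_sub_one, pow_one, Pi.mul_apply]
      linarith)
  have hsq : (r ^ k * x r) ^ 2 ≤ 0 := by
    simp only [hx, hy, mul_zero, ne_eq, OfNat.ofNat_ne_zero, not_false_eq_true, zero_pow,
      add_zero, neg_zero, mul_nonneg_iff_of_pos_left (Real.exp_pos _)] at hgronwall
    linarith [sq_nonneg (r ^ k * y r)]
  have : r ^ k * x r = 0 := by simpa using le_antisymm hsq (sq_nonneg _)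
  exact (mul_eq_zero.1 this).resolve_left (by positivity)

lemma eq_zero_of_right_eq_zero (s : RadialSolution k h x y) {L R : ℝ} (hL : 0 ≤ L) (hR : 0 < R)
    (hh : ∀ t ∈ Ioo 0 R, |h t| ≤ L * |x t|) (hx : x R = 0) (hy : y R = 0) : x 0 = 0 := by
  have hlim : Tendsto x (𝓝[>] 0) (𝓝 (x 0)) :=
    (s.continuousOn 0 self_mem_Ici).mono_left (nhdsWithin_mono _ Ioi_subset_Ici_self)
  refine tendsto_nhds_unique hlim (tendsto_const_nhds.congr' ?_)
  filter_upwards [Ioo_mem_nhdsGT hR] with r hr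
  exact (s.eq_zero_of_eq_zero_right hL hr.1 hr.2.le
    (fun t ht => hh t ⟨hr.1.trans ht.1, ht.2⟩) hx hy).symm

/-- L'Hôpital's rule for `r ^ k * y r / r ^ (k + 1)`. -/
lemma tendsto_deriv_div (s : RadialSolution k h x y) (hh : ContinuousWithinAt h (Ici 0) 0) :
    Tendsto (fun r => y r / r) (𝓝[>] 0) (𝓝 (-h 0 / (k + 1))) := by
  have hh' : Tendsto h (𝓝[>] 0) (𝓝 (h 0)) := hh.mono_left (nhdsWithin_mono _ Ioi_subset_Ici_self)
  have hy : Tendsto y (𝓝[>] 0) (𝓝 0) := by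
    simpa only [s.deriv_zero] using
      (s.continuousOn_deriv 0 self_mem_Ici).mono_left (nhdsWithin_mono 0 Ioi_subset_Ici_self)
  have hpow (m : ℕ) : Tendsto (fun r : ℝ => r ^ m) (𝓝[>] 0) (𝓝 (0 ^ m)) :=
    ((continuous_pow m).tendsto 0).mono_left nhdsWithin_le_nhds
  have hlhopital := HasDerivAt.lhopital_zero_right_on_Ioo (a := 0) (b := 1)
    (f := fun r => r ^ k * y r) (g := fun r => r ^ (k + 1)) (g' := fun r => (k + 1) * r ^ k)
    (l := 𝓝 (-h 0 / (k + 1))) one_pos (fun r hr => s.hasDerivAt_flux hr.1)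
    (fun r _ => by simpa using hasDerivAt_pow (k + 1) r)
    (fun r hr => by have := hr.1; positivity)
    (by simpa using (hpow k).mul hy) (by simpa using hpow (k + 1))
    ((hh'.neg.div_const (k + 1 : ℝ)).congr' ?_)
  · refine hlhopital.congr' ?_
    filter_upwards [self_mem_nhdsWithin] with r (hr : 0 < r)
    field_simp
    ring
  · filter_upwards [self_mem_nhdsWithin] with r (hr : 0 < r)
    field_simp

end RadialSolution

/-! ### The radial initial value problem -/

namespace RadialSolution

variable {k : ℕ} {h x y : ℝ → ℝ} {a M r : ℝ}

lemma deriv_le_exp (s : RadialSolution k h x y) (ha : 0 ≤ a) (hM : 0 < M)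
    (hh : ∀ t ∈ Ioo 0 r, -h t ≤ a * Real.exp (M * t)) (hr : 0 ≤ r) :
    y r ≤ a / M * Real.exp (M * r) := by
  rcases hr.eq_or_lt with rfl | hr
  · rw [s.deriv_zero]; positivity
  have hanti := le_of_hasDerivAt_nonpos
    (φ := fun t => t ^ k * y t - a / M * (t ^ k * Real.exp (M * t))) hr.le
    ((s.continuousOn_flux le_rfl).sub (by fun_prop))
    (fun t ht => (s.hasDerivAt_flux ht.1).sub
      (((hasDerivAt_pow_div k ht.1).mul (hasDerivAt_exp_mul M t)).const_mul (a / M)))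
    (fun t ht => by
      have ht0 := ht.1
      have hgrowth : 0 ≤ a / M * (k / t * t ^ k * Real.exp (M * t)) := by positivity
      have hmain : a / M * (t ^ k * (Real.exp (M * t) * M)) = t ^ k * (a * Real.exp (M * t)) := by
        field_simp
      rw [mul_add, hmain]
      nlinarith [hh t ht, pow_pos ht0 k])
  simp only [s.deriv_zero, mul_zero, zero_sub, Real.exp_zero, mul_one] at hanti
  have h0 : 0 ≤ a / M * 0 ^ k := by positivity
  have hfactor : r ^ k * (y r - a / M * Real.exp (M * r)) ≤ 0 := by linarith
  linarith [nonpos_of_mul_nonpos_right hfactor (pow_pos hr k)]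

lemma sub_le_exp (s : RadialSolution k h x y) (ha : 0 ≤ a) (hM : 0 < M)
    (hh : ∀ t ∈ Ioo 0 r, -h t ≤ a * Real.exp (M * t)) (hr : 0 ≤ r) :
    x r - x 0 ≤ a / M ^ 2 * Real.exp (M * r) := by
  have hx := s.continuousOn_Icc (b := r) le_rfl
  have hanti := le_of_hasDerivAt_nonpos (φ := fun t => x t - a / M ^ 2 * Real.exp (M * t)) hr
    (by fun_prop)
    (fun t ht => (s.hasDerivAt t ht.1).sub ((hasDerivAt_exp_mul M t).const_mul _)) (fun t ht => by
      have hy := s.deriv_le_exp ha hM (fun τ hτ => hh τ ⟨hτ.1, hτ.2.trans ht.2⟩) ht.1.le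
      have : a / M ^ 2 * (Real.exp (M * t) * M) = a / M * Real.exp (M * t) := by field_simp
      linarith)
  have : 0 ≤ a / M ^ 2 * Real.exp (M * 0) := by positivity
  linarith

lemma abs_sub_le_exp (s : RadialSolution k h x y) (ha : 0 ≤ a) (hM : 0 < M)
    (hh : ∀ t ∈ Ioo 0 r, |h t| ≤ a * Real.exp (M * t)) (hr : 0 ≤ r) :
    |x r - x 0| ≤ a / M ^ 2 * Real.exp (M * r) := by
  have hupper := s.sub_le_exp ha hM (fun t ht => (neg_le_abs _).trans (hh t ht)) hr
  have hlower := (s.const_mul (-1)).sub_le_exp ha hM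
    (fun t ht => by linarith [le_abs_self (h t), hh t ht]) hr
  exact abs_le.2 ⟨by linarith, hupper⟩

end RadialSolution

/-- The weighted average `∫₀¹ s ^ k h (t s) ds = t ^ (-(k + 1)) ∫₀ᵗ s ^ k h s ds` of `h` over the
ball of radius `t`. In the first form it is visibly continuous up to `t = 0`. -/
noncomputable def radialAverage (k : ℕ) (h : ℝ → ℝ) (t : ℝ) : ℝ :=
  ∫ s in (0 : ℝ)..1, s ^ k * h (t * s)

lemma continuous_radialAverage (k : ℕ) {h : ℝ → ℝ} (hh : Continuous h) :
    Continuous (radialAverage k h) :=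
  intervalIntegral.continuous_parametric_intervalIntegral_of_continuous' (by fun_prop) 0 1

lemma mul_radialAverage (k : ℕ) (h : ℝ → ℝ) {t : ℝ} (ht : 0 < t) :
    t * radialAverage k h t = (t ^ k)⁻¹ * ∫ s in (0 : ℝ)..t, s ^ k * h s := by
  have hsubst :=
    intervalIntegral.integral_comp_mul_left (a := 0) (b := 1) (fun s => s ^ k * h s) ht.ne'
  simp only [mul_zero, mul_one, smul_eq_mul, mul_pow, mul_assoc,
    intervalIntegral.integral_const_mul] at hsubst
  unfold radialAverage
  field_simp at hsubst ⊢
  linarith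

lemma exists_radialSolution_of_source (k : ℕ) {h : ℝ → ℝ} (hh : Continuous h) (α : ℝ) :
    ∃ x y : ℝ → ℝ, Continuous x ∧ RadialSolution k h x y ∧ x 0 = α := by
  have hcont : Continuous (fun t => t * radialAverage k h t) :=
    continuous_id.mul (continuous_radialAverage k hh)
  have hprim : Continuous (fun s => s ^ k * h s) := by fun_prop
  set x := fun r => α - ∫ t in (0 : ℝ)..r, t * radialAverage k h t
  set y := fun r => -(r * radialAverage k h r)
  have hx : ∀ r, HasDerivAt x (y r) r :=
    fun r => (hcont.integral_hasStrictDerivAt 0 r).hasDerivAt.const_sub α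
  have hxc : Continuous x := continuous_iff_continuousAt.2 fun r => (hx r).continuousAt
  refine ⟨x, y, hxc, ⟨hxc.continuousOn, hcont.neg.continuousOn, by simp [y], fun r _ => hx r,
    fun r hr => ?_⟩, by simp [x]⟩
  have hquot := (((hasDerivAt_pow_div k hr).inv (by positivity)).mul
    (hprim.integral_hasStrictDerivAt 0 r).hasDerivAt).neg
  refine (hquot.congr_of_eventuallyEq ?_).congr_deriv ?_
  · filter_upwards [lt_mem_nhds hr] with t ht
    exact congrArg Neg.neg (mul_radialAverage k h ht)
  · simp only [Pi.inv_apply, y, mul_radialAverage k h hr]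
    field_simp
    ring

section Picard

variable {k : ℕ} {N : ℝ → ℝ → ℝ} {L : ℝ≥0} {C : ℝ}

lemma abs_le_of_lipschitzWith (hlip : ∀ t, LipschitzWith L (N t)) (hbd : ∀ t, |N t 0| ≤ C)
    (t z : ℝ) : |N t z| ≤ C + L * |z| := by
  have hz := (hlip t).dist_le_mul z 0
  simp only [Real.dist_eq, sub_zero] at hz
  linarith [hbd t, abs_sub_abs_le_abs_sub (N t z) (N t 0)]

-- The weight `exp ((L + 1) t)` makes the Picard map a contraction on the whole half-line.
lemma abs_sub_le_of_picard (hlip : ∀ t, LipschitzWith L (N t)) {u v : ℝ →ᵇ ℝ}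
    {x₁ y₁ x₂ y₂ : ℝ → ℝ}
    (s₁ : RadialSolution k (fun t => N t (Real.exp ((L + 1) * t) * u t)) x₁ y₁)
    (s₂ : RadialSolution k (fun t => N t (Real.exp ((L + 1) * t) * v t)) x₂ y₂)
    (h0 : x₁ 0 = x₂ 0) {r : ℝ} (hr : 0 ≤ r) :
    |x₁ r - x₂ r| ≤ 1 / 2 * dist u v * Real.exp ((L + 1) * r) := by
  have hdiff := (s₁.sub s₂).abs_sub_le_exp (a := L * dist u v) (M := L + 1) (by positivity)
    (by positivity) (fun t _ => ?_) hr
  · simp only [h0, sub_self, sub_zero] at hdiff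
    have hhalf : (L : ℝ) / (L + 1) ^ 2 ≤ 1 / 2 := by
      rw [div_le_iff₀ (by positivity)]
      nlinarith [sq_nonneg (L : ℝ)]
    calc |x₁ r - x₂ r| ≤ L * dist u v / (L + 1) ^ 2 * Real.exp ((L + 1) * r) := hdiff
      _ = L / (L + 1) ^ 2 * dist u v * Real.exp ((L + 1) * r) := by ring
      _ ≤ 1 / 2 * dist u v * Real.exp ((L + 1) * r) := by gcongr
  · refine ((hlip t).dist_le_mul _ _).trans ?_
    rw [Real.dist_eq, ← mul_sub, abs_mul, abs_of_pos (Real.exp_pos _), ← Real.dist_eq]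
    have := BoundedContinuousFunction.dist_coe_le_dist (f := u) (g := v) t
    calc (L : ℝ) * (Real.exp ((L + 1) * t) * dist (u t) (v t))
        ≤ L * (Real.exp ((L + 1) * t) * dist u v) := by gcongr
      _ = L * dist u v * Real.exp ((L + 1) * t) := by ring

lemma abs_le_of_picard (hlip : ∀ t, LipschitzWith L (N t)) (hbd : ∀ t, |N t 0| ≤ C) {u : ℝ →ᵇ ℝ}
    {x y : ℝ → ℝ} (s : RadialSolution k (fun t => N t (Real.exp ((L + 1) * t) * u t)) x y)
    {r : ℝ} (hr : 0 ≤ r) :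
    |x r| ≤ (|x 0| + (C + L * ‖u‖) / (L + 1) ^ 2) * Real.exp ((L + 1) * r) := by
  have hC : 0 ≤ C := (abs_nonneg _).trans (hbd 0)
  have hone {t : ℝ} (ht : 0 ≤ t) : 1 ≤ Real.exp ((L + 1) * t) := Real.one_le_exp (by positivity)
  have hdiff := s.abs_sub_le_exp (a := C + L * ‖u‖) (M := L + 1) (by positivity) (by positivity)
    (fun t ht => ?_) hr
  · nlinarith [abs_sub_abs_le_abs_sub (x r) (x 0), hone hr, abs_nonneg (x 0)]
  · have hu : |u t| ≤ ‖u‖ := u.norm_coe_le_norm t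
    calc |N t (Real.exp ((L + 1) * t) * u t)|
        ≤ C + L * |Real.exp ((L + 1) * t) * u t| := abs_le_of_lipschitzWith hlip hbd t _
      _ = C * 1 + L * |u t| * Real.exp ((L + 1) * t) := by
          rw [abs_mul, abs_of_pos (Real.exp_pos _)]; ring
      _ ≤ C * Real.exp ((L + 1) * t) + L * ‖u‖ * Real.exp ((L + 1) * t) := by
          gcongr
          exact hone ht.1.le
      _ = (C + L * ‖u‖) * Real.exp ((L + 1) * t) := by ring

lemma exists_picardMap (k : ℕ) (hN : Continuous (Function.uncurry N))
    (hlip : ∀ t, LipschitzWith L (N t)) (hbd : ∀ t, |N t 0| ≤ C) (α : ℝ) :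
    ∃ T : (ℝ →ᵇ ℝ) → (ℝ →ᵇ ℝ), ∀ u, ∃ x y : ℝ → ℝ,
      RadialSolution k (fun t => N t (Real.exp ((L + 1) * t) * u t)) x y ∧ x 0 = α ∧
        ∀ r, x |r| = Real.exp ((L + 1) * |r|) * T u r := by
  have hsol (u : ℝ →ᵇ ℝ) : ∃ x y : ℝ → ℝ, Continuous x ∧
      RadialSolution k (fun t => N t (Real.exp ((L + 1) * t) * u t)) x y ∧ x 0 = α :=
    exists_radialSolution_of_source k
      (hN.comp (by fun_prop : Continuous fun t : ℝ => (t, Real.exp ((L + 1) * t) * u t))) α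
  choose x y hx s hα using hsol
  refine ⟨fun u => BoundedContinuousFunction.ofNormedAddCommGroup
    (fun r => (Real.exp ((L + 1) * |r|))⁻¹ * x u |r|) ?_ (|α| + (C + L * ‖u‖) / (L + 1) ^ 2) ?_,
    fun u => ⟨x u, y u, s u, hα u, fun r => ?_⟩⟩
  · have := hx u
    exact (Continuous.inv₀ (by fun_prop) fun r => (Real.exp_pos _).ne').mul (by fun_prop)
  · intro r
    have hbound := abs_le_of_picard hlip hbd (s u) (abs_nonneg r)
    rw [hα] at hbound
    rw [Real.norm_eq_abs, abs_mul, abs_of_pos (inv_pos.2 (Real.exp_pos _)),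
      inv_mul_le_iff₀ (Real.exp_pos _)]
    linarith
  · exact (mul_inv_cancel_left₀ (Real.exp_pos _).ne' _).symm

theorem exists_radialSolution (k : ℕ) (hN : Continuous (Function.uncurry N))
    (hlip : ∀ t, LipschitzWith L (N t)) (hbd : ∀ t, |N t 0| ≤ C) (α : ℝ) :
    ∃ x y : ℝ → ℝ, RadialSolution k (fun t => N t (x t)) x y ∧ x 0 = α := by
  obtain ⟨T, hT⟩ := exists_picardMap k hN hlip hbd α
  choose x y s hα hx using hT
  have hcontract : ContractingWith (1 / 2) T := by
    refine ⟨by norm_num [← NNReal.coe_lt_coe], LipschitzWith.of_dist_le_mul fun u v => ?_⟩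
    rw [BoundedContinuousFunction.dist_le (by positivity)]
    intro r
    have hdist := abs_sub_le_of_picard hlip (s u) (s v) ((hα u).trans (hα v).symm) (abs_nonneg r)
    rw [hx, hx, ← mul_sub, abs_mul, abs_of_pos (Real.exp_pos _), mul_comm,
      mul_le_mul_iff_left₀ (Real.exp_pos _)] at hdist
    simpa [Real.dist_eq] using hdist
  set u := hcontract.fixedPoint
  refine ⟨x u, y u, (s u).congr_source fun r hr => ?_, hα u⟩
  have hfix := hx u r
  rw [show T u = u from hcontract.fixedPoint_isFixedPt, abs_of_pos hr] at hfix
  rw [hfix]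

end Picard

/-! ### Bistable nonlinearities -/

/-- `g` is a globally Lipschitz nonlinearity with primitive `G` which, on `[0, c]`, is negative on
`(0, b)` and positive on `(b, c)`, has total mass `G c > 0`, and is extended by `0` to the left. -/
structure BistableNonlinearity (g G : ℝ → ℝ) (L : ℝ≥0) (b c : ℝ) : Prop where
  b_pos : 0 < b
  b_lt_c : b < c
  lipschitz : LipschitzWith L g
  hasDerivAt_primitive : ∀ x, HasDerivAt G (g x) x
  primitive_zero : G 0 = 0
  eq_zero_of_nonpos : ∀ x ≤ 0, g x = 0
  eq_zero_right : g c = 0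
  neg : ∀ x ∈ Ioo 0 b, g x < 0
  pos : ∀ x ∈ Ioo b c, 0 < g x
  primitive_pos : 0 < G c

namespace BistableNonlinearity

variable {g G : ℝ → ℝ} {L : ℝ≥0} {b c x : ℝ} (H : BistableNonlinearity g G L b c)
include H

lemma c_pos : 0 < c := H.b_pos.trans H.b_lt_c

lemma continuous_primitive : Continuous G :=
  continuous_iff_continuousAt.2 fun x => (H.hasDerivAt_primitive x).continuousAt

lemma abs_le (x : ℝ) : |g x| ≤ L * |x| := by
  simpa [H.eq_zero_of_nonpos 0 le_rfl] using H.lipschitz.dist_le_mul x 0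

lemma primitive_eq_zero_of_nonpos (hx : x ≤ 0) : G x = 0 := by
  have hG : ∀ t ∈ Ioo x 0, HasDerivAt G 0 t := fun t ht => by
    simpa only [H.eq_zero_of_nonpos t ht.2.le] using H.hasDerivAt_primitive t
  have hc := H.continuous_primitive.continuousOn (s := Icc x 0)
  have hge := le_of_hasDerivAt_nonneg hx hc hG fun _ _ => le_rfl
  have hle := le_of_hasDerivAt_nonpos hx hc hG fun _ _ => le_rfl
  rw [H.primitive_zero] at hge hle
  exact le_antisymm hge hle

lemma primitive_neg (hx : x ∈ Ioc 0 b) : G x < 0 := H.primitive_zero ▸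
  lt_of_hasDerivAt_neg hx.1 H.continuous_primitive.continuousOn
    (fun t _ => H.hasDerivAt_primitive t) fun t ht => H.neg t ⟨ht.1, ht.2.trans_le hx.2⟩

lemma primitive_nonpos (hx : x ≤ b) : G x ≤ 0 :=
  (le_or_gt x 0).elim (fun h => (H.primitive_eq_zero_of_nonpos h).le)
    fun h => (H.primitive_neg ⟨h, hx⟩).le

lemma strictMonoOn_primitive : StrictMonoOn G (Icc b c) := fun _ hx _ hy hxy =>
  lt_of_hasDerivAt_pos hxy H.continuous_primitive.continuousOn
    (fun t _ => H.hasDerivAt_primitive t)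
    fun t ht => H.pos t ⟨hx.1.trans_lt ht.1, ht.2.trans_le hy.2⟩

lemma primitive_lt (hx : x < c) : G x < G c :=
  (le_or_gt x b).elim (fun h => (H.primitive_nonpos h).trans_lt H.primitive_pos)
    fun h => H.strictMonoOn_primitive ⟨h.le, hx.le⟩ ⟨H.b_lt_c.le, le_rfl⟩ hx

lemma primitive_left_le (hx : x ≤ c) : G b ≤ G x := by
  rcases le_or_gt x 0 with h0 | h0
  · exact H.primitive_eq_zero_of_nonpos h0 ▸ H.primitive_nonpos le_rfl
  rcases le_or_gt x b with hb | hb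
  · exact le_of_hasDerivAt_nonpos hb H.continuous_primitive.continuousOn
      (fun t _ => H.hasDerivAt_primitive t) fun t ht => (H.neg t ⟨h0.trans ht.1, ht.2⟩).le
  · exact (H.strictMonoOn_primitive ⟨le_rfl, H.b_lt_c.le⟩ ⟨hb.le, hx⟩ hb).le

lemma eq_zero_or_eq_of_eq_zero (h0 : 0 ≤ x) (hx : x < c) (hg : g x = 0) : x = 0 ∨ x = b := by
  by_contra! hne
  have h0' : 0 < x := h0.lt_of_ne' hne.1
  rcases hne.2.lt_or_gt with hb | hb
  · exact (H.neg x ⟨h0', hb⟩).ne hg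
  · exact (H.pos x ⟨hb, hx⟩).ne' hg

lemma exists_primitive_pos : ∃ γ ∈ Ioo b c, 0 < G γ := by
  have hpos : ∀ᶠ z in 𝓝[<] c, 0 < G z :=
    (H.continuous_primitive.continuousAt.eventually (lt_mem_nhds H.primitive_pos)).filter_mono
      nhdsWithin_le_nhds
  obtain ⟨γ, hγ, hmem⟩ := (hpos.and (Ioo_mem_nhdsLT H.b_lt_c)).exists
  exact ⟨γ, hmem, hγ⟩

end BistableNonlinearity

/-! ### Energy and monotonicity -/

/-- A radial solution of the nonlinear equation `x'' + (k / r) x' + g x = 0`. -/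
abbrev NonlinearRadialSolution (k : ℕ) (g x y : ℝ → ℝ) : Prop :=
  RadialSolution k (fun r => g (x r)) x y

/-- The energy `x' ^ 2 / 2 + G x` of `x`, which friction makes decrease along solutions. -/
noncomputable def radialEnergy (G x y : ℝ → ℝ) (r : ℝ) : ℝ := y r ^ 2 / 2 + G (x r)

namespace RadialSolution

variable {k : ℕ} {h x y : ℝ → ℝ} {r s : ℝ} (S : RadialSolution k h x y)
include S

lemma deriv_neg_of_source_pos (hr : 0 < r) (hh : ∀ t ∈ Ioo 0 r, 0 < h t) : y r < 0 := by
  have hflux := lt_of_hasDerivAt_neg hr (S.continuousOn_flux le_rfl)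
    (fun t ht => S.hasDerivAt_flux ht.1)
    (fun t ht => neg_lt_zero.2 (mul_pos (pow_pos ht.1 k) (hh t ht)))
  simp only [S.deriv_zero, mul_zero] at hflux
  exact neg_of_mul_neg_right hflux (pow_pos hr k).le

lemma le_of_deriv_nonpos (hr : 0 ≤ r) (hrs : r ≤ s) (hy : ∀ t ∈ Ioo r s, y t ≤ 0) : x s ≤ x r :=
  le_of_hasDerivAt_nonpos hrs (S.continuousOn_Icc hr)
    (fun t ht => S.hasDerivAt t (hr.trans_lt ht.1)) hy

lemma lt_of_deriv_neg (hr : 0 ≤ r) (hrs : r < s) (hy : ∀ t ∈ Ioo r s, y t < 0) : x s < x r :=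
  lt_of_hasDerivAt_neg hrs (S.continuousOn_Icc hr)
    (fun t ht => S.hasDerivAt t (hr.trans_lt ht.1)) hy

end RadialSolution

namespace NonlinearRadialSolution

section Lipschitz

variable {k : ℕ} {g x₁ y₁ x₂ y₂ : ℝ → ℝ} {L : ℝ≥0} {r R : ℝ}

lemma sq_sub_add_sq_sub_le (hg : LipschitzWith L g) (s₁ : NonlinearRadialSolution k g x₁ y₁)
    (s₂ : NonlinearRadialSolution k g x₂ y₂) (hr : 0 ≤ r) :
    (x₁ r - x₂ r) ^ 2 + (y₁ r - y₂ r) ^ 2 ≤ Real.exp ((L + 2) * r) * (x₁ 0 - x₂ 0) ^ 2 := by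
  have hgronwall := (s₁.sub s₂).sq_add_sq_le (η := 0) L.coe_nonneg hr
    (fun t _ => by simpa [Real.dist_eq] using hg.dist_le_mul (x₁ t) (x₂ t))
  simpa using hgronwall

lemma abs_sub_le_and_abs_deriv_sub_le (hg : LipschitzWith L g)
    (s₁ : NonlinearRadialSolution k g x₁ y₁) (s₂ : NonlinearRadialSolution k g x₂ y₂)
    (hr : r ∈ Icc 0 R) :
    |x₁ r - x₂ r| ≤ Real.exp ((L + 2) * R) * |x₁ 0 - x₂ 0| ∧
      |y₁ r - y₂ r| ≤ Real.exp ((L + 2) * R) * |x₁ 0 - x₂ 0| := by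
  have hexp : Real.exp ((L + 2) * r) ≤ Real.exp ((L + 2) * R) ^ 2 := by
    rw [← Real.exp_nat_mul]
    apply Real.exp_le_exp.2
    have : 0 ≤ (L + 2) * r := mul_nonneg (by positivity) hr.1
    have : (L + 2) * r ≤ (L + 2) * R := by gcongr; exact hr.2
    push_cast
    linarith
  have hsq : (x₁ r - x₂ r) ^ 2 + (y₁ r - y₂ r) ^ 2 ≤
      (Real.exp ((L + 2) * R) * |x₁ 0 - x₂ 0|) ^ 2 := by
    rw [mul_pow, sq_abs]
    exact (sq_sub_add_sq_sub_le hg s₁ s₂ hr.1).trans (by gcongr)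
  exact ⟨abs_le_of_sq_le_sq (by nlinarith [sq_nonneg (y₁ r - y₂ r)]) (by positivity),
    abs_le_of_sq_le_sq (by nlinarith [sq_nonneg (x₁ r - x₂ r)]) (by positivity)⟩

lemma eq_of_initial_eq (hg : LipschitzWith L g) (s₁ : NonlinearRadialSolution k g x₁ y₁)
    (s₂ : NonlinearRadialSolution k g x₂ y₂) (h0 : x₁ 0 = x₂ 0) (hr : 0 ≤ r) : x₁ r = x₂ r := by
  have hdist := (abs_sub_le_and_abs_deriv_sub_le hg s₁ s₂ ⟨hr, le_rfl⟩).1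
  rw [h0, sub_self, abs_zero, mul_zero] at hdist
  exact sub_eq_zero.1 (abs_nonpos_iff.1 hdist)

end Lipschitz

section Energy

variable {k : ℕ} {g G x y : ℝ → ℝ} {r s : ℝ} (hG : ∀ z, HasDerivAt G (g z) z)
  (S : NonlinearRadialSolution k g x y)
include hG S

lemma hasDerivAt_energy (hr : 0 < r) :
    HasDerivAt (radialEnergy G x y) (-(k / r) * y r ^ 2) r := by
  refine ((((S.hasDerivAt_deriv r hr).pow 2).div_const 2).add
    ((hG (x r)).comp r (S.hasDerivAt r hr))).congr_deriv ?_
  simp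
  ring

lemma continuousOn_energy : ContinuousOn (radialEnergy G x y) (Ici 0) :=
  ((S.continuousOn_deriv.pow 2).div_const 2).add
    ((continuous_iff_continuousAt.2 fun z => (hG z).continuousAt).comp_continuousOn S.continuousOn)

lemma energy_le (hr : 0 ≤ r) (hrs : r ≤ s) : radialEnergy G x y s ≤ radialEnergy G x y r :=
  le_of_hasDerivAt_nonpos hrs ((S.continuousOn_energy hG).mono fun _ ht => hr.trans ht.1)
    (fun t ht => S.hasDerivAt_energy hG (hr.trans_lt ht.1)) (fun t ht => by
      have := hr.trans_lt ht.1
      rw [neg_mul]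
      exact neg_nonpos.2 (by positivity))

/-- The energy lost to friction between `R` and `s` is at most `k B / R` times the distance
travelled, `B` being a bound for the speed. -/
lemma energy_sub_le {B R : ℝ} (hR : 0 < R) (hRs : R ≤ s) (hy : ∀ t ∈ Ioo R s, y t ∈ Icc (-B) 0) :
    radialEnergy G x y R - k * B / R * (x R - x s) ≤ radialEnergy G x y s := by
  have hmono := le_of_hasDerivAt_nonneg
    (φ := fun t => radialEnergy G x y t - k * B / R * x t) hRs
    (((S.continuousOn_energy hG).mono fun _ ht => hR.le.trans ht.1).sub
      (continuousOn_const.mul (S.continuousOn_Icc hR.le)))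
    (fun t ht => (S.hasDerivAt_energy hG (hR.trans ht.1)).sub
      ((S.hasDerivAt t (hR.trans ht.1)).const_mul _)) (fun t ht => by
      have hspeed : y t ^ 2 ≤ B * (-y t) := by nlinarith [(hy t ht).1, (hy t ht).2]
      have hloss : k / t * y t ^ 2 ≤ k / R * (B * (-y t)) := by
        have := hR.trans ht.1
        gcongr
        exact ht.1.le
      have : k * B / R * y t = -(k / R * (B * (-y t))) := by ring
      linarith)
  linarith

end Energy

lemma energy_zero {k : ℕ} {g x y : ℝ → ℝ} (G : ℝ → ℝ) (S : NonlinearRadialSolution k g x y) :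
    radialEnergy G x y 0 = G (x 0) := by
  simp [radialEnergy, S.deriv_zero]

section Bistable

variable {k : ℕ} {g G x y : ℝ → ℝ} {L : ℝ≥0} {b c r R : ℝ}

lemma lt_of_initial_lt (S : NonlinearRadialSolution k g x y) (H : BistableNonlinearity g G L b c)
    (hc : x 0 < c) (hr : 0 ≤ r) : x r < c := by
  by_contra! hcr
  obtain ⟨s, hs, hxs⟩ := intermediate_value_Icc hr (S.continuousOn_Icc le_rfl) ⟨hc.le, hcr⟩
  have henergy := S.energy_le H.hasDerivAt_primitive le_rfl hs.1
  rw [S.energy_zero G, radialEnergy, hxs] at henergy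
  linarith [H.primitive_lt hc, sq_nonneg (y s)]

lemma abs_deriv_le (S : NonlinearRadialSolution k g x y) (H : BistableNonlinearity g G L b c)
    (hc : x 0 < c) (hr : 0 ≤ r) : |y r| ≤ √(2 * (G c - G b)) := by
  have henergy := S.energy_le H.hasDerivAt_primitive le_rfl hr
  rw [S.energy_zero G, radialEnergy] at henergy
  apply Real.abs_le_sqrt
  linarith [H.primitive_left_le (S.lt_of_initial_lt H hc hr).le, H.primitive_lt hc]

lemma deriv_neg_of_forall_gt (S : NonlinearRadialSolution k g x y)
    (H : BistableNonlinearity g G L b c) (hc : x 0 < c) (hr : 0 < r)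
    (hb : ∀ t ∈ Ioo 0 r, b < x t) : y r < 0 :=
  S.deriv_neg_of_source_pos hr fun t ht =>
    H.pos _ ⟨hb t ht, S.lt_of_initial_lt H hc ht.1.le⟩

lemma exists_deriv_neg (S : NonlinearRadialSolution k g x y) (H : BistableNonlinearity g G L b c)
    (hb : b < x 0) (hc : x 0 < c) : ∃ ε > 0, ∀ r ∈ Ioc 0 ε, y r < 0 := by
  have hev : ∀ᶠ r in 𝓝[≥] 0, b < x r := (S.continuousOn 0 self_mem_Ici).eventually (lt_mem_nhds hb)
  obtain ⟨ε, hε, hsub⟩ := mem_nhdsGE_iff_exists_Ico_subset.1 hev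
  exact ⟨ε, hε, fun r hr => S.deriv_neg_of_forall_gt H hc hr.1 fun t ht =>
    hsub ⟨ht.1.le, ht.2.trans_le hr.2⟩⟩

-- A critical point ending a decreasing phase above `b` contradicts `deriv_neg_of_forall_gt`.
lemma deriv_neg_of_critical_gt (S : NonlinearRadialSolution k g x y)
    (H : BistableNonlinearity g G L b c) (hb : b < x 0) (hc : x 0 < c)
    (hcrit : ∀ s ∈ Ioc 0 R, y s = 0 → (∀ t ∈ Ioo 0 s, y t < 0) → b < x s) (hr : r ∈ Ioc 0 R) :
    y r < 0 := by
  obtain ⟨ε, hε, hy⟩ := S.exists_deriv_neg H hb hc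
  by_contra! hyr
  have hεr : ε < r := by
    by_contra! h
    exact (hy r ⟨hr.1, h⟩).not_ge hyr
  obtain ⟨s, hs, hs0, hneg'⟩ :=
    exists_first_zero hεr.le (S.continuousOn_deriv_Icc hε.le) (hy ε ⟨hε, le_rfl⟩) hyr
  have hs_pos : 0 < s := hε.trans hs.1
  have hneg : ∀ t ∈ Ioo 0 s, y t < 0 := fun t ht =>
    (le_or_gt t ε).elim (fun h => hy t ⟨ht.1, h⟩) fun h => hneg' t ⟨h.le, ht.2⟩
  have hxs := hcrit s ⟨hs_pos, hs.2.trans hr.2⟩ hs0 hneg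
  refine (S.deriv_neg_of_forall_gt H hc hs_pos fun t ht => hxs.trans_le ?_).ne hs0
  exact S.le_of_deriv_nonpos ht.1.le ht.2.le fun u hu => (hneg u ⟨ht.1.trans hu.1, hu.2⟩).le

lemma pos_of_nonneg (S : NonlinearRadialSolution k g x y) (H : BistableNonlinearity g G L b c)
    (h0 : 0 < x 0) (hx : ∀ r, 0 ≤ r → 0 ≤ x r) (hr : 0 ≤ r) : 0 < x r := by
  refine (hx r hr).lt_of_ne fun hxr => ?_
  have hr0 : 0 < r := hr.lt_of_ne (by rintro rfl; exact h0.ne hxr)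
  have hmin : IsLocalMin x r := by
    filter_upwards [lt_mem_nhds hr0] with t ht using hxr ▸ hx t ht.le
  exact h0.ne' (S.eq_zero_of_right_eq_zero L.coe_nonneg hr0 (fun t _ => H.abs_le _) hxr.symm
    (hmin.hasDerivAt_eq_zero (S.hasDerivAt r hr0)))

end Bistable

end NonlinearRadialSolution

/-! ### Limits of decreasing solutions -/

lemma exists_tendsto_of_antitoneOn_Ici {φ : ℝ → ℝ} {a B : ℝ} (hφ : AntitoneOn φ (Ici a))
    (hB : ∀ r, a ≤ r → B ≤ φ r) : ∃ l, Tendsto φ atTop (𝓝 l) := by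
  have hanti : Antitone (fun r => φ (max r a)) := fun r s hrs =>
    hφ (le_max_right r a) (le_max_right s a) (max_le_max_right a hrs)
  have hbdd : BddBelow (range fun r => φ (max r a)) :=
    ⟨B, forall_mem_range.2 fun r => hB _ (le_max_right r a)⟩
  refine ⟨_, (tendsto_atTop_ciInf hanti hbdd).congr' ?_⟩
  filter_upwards [eventually_ge_atTop a] with r hr
  rw [max_eq_left hr]

lemma tendsto_radialEnergy {G x y : ℝ → ℝ} {l : ℝ} (hG : Continuous G)
    (hx : Tendsto x atTop (𝓝 l)) (hy : Tendsto y atTop (𝓝 0)) :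
    Tendsto (radialEnergy G x y) atTop (𝓝 (G l)) := by
  simpa using! ((hy.pow 2).div_const 2).add ((hG.tendsto l).comp hx)

namespace NonlinearRadialSolution

variable {k : ℕ} {g G x y : ℝ → ℝ} {L : ℝ≥0} {b c l e : ℝ}

lemma tendsto_deriv_zero (S : NonlinearRadialSolution k g x y) (hG : Continuous G)
    (hx : Tendsto x atTop (𝓝 l)) (he : Tendsto (radialEnergy G x y) atTop (𝓝 e))
    (hy : ∀ r, 0 < r → y r < 0) : Tendsto y atTop (𝓝 0) := by
  have hsq : Tendsto (fun r => y r ^ 2) atTop (𝓝 (2 * (e - G l))) :=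
    ((he.sub ((hG.tendsto l).comp hx)).const_mul 2).congr fun r => by
      simp only [radialEnergy, Function.comp]
      ring
  have hlim : Tendsto y atTop (𝓝 (-√(2 * (e - G l)))) := by
    refine ((Real.continuous_sqrt.tendsto _).comp hsq).neg.congr' ?_
    filter_upwards [eventually_gt_atTop 0] with r hr
    rw [Function.comp, Real.sqrt_sq_eq_abs, abs_of_neg (hy r hr), neg_neg]
  rwa [eq_zero_of_tendsto_of_hasDerivAt_tendsto S.hasDerivAt hx hlim] at hlim

lemma eq_zero_of_tendsto (S : NonlinearRadialSolution k g x y) (hg : Continuous g)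
    (hx : Tendsto x atTop (𝓝 l)) (hy : Tendsto y atTop (𝓝 0)) : g l = 0 := by
  have hfriction : Tendsto (fun r : ℝ => (k : ℝ) / r) atTop (𝓝 0) :=
    tendsto_const_nhds.div_atTop tendsto_id
  have hlim := (hfriction.neg.mul hy).sub ((hg.tendsto l).comp hx)
  have := eq_zero_of_tendsto_of_hasDerivAt_tendsto S.hasDerivAt_deriv hy hlim
  simpa using this

lemma exists_tendsto (S : NonlinearRadialSolution k g x y) (H : BistableNonlinearity g G L b c)
    (hc : x 0 < c) (hx : ∀ r, 0 ≤ r → 0 ≤ x r) (hy : ∀ r, 0 < r → y r < 0) :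
    ∃ l, (l = 0 ∨ l = b) ∧ Tendsto x atTop (𝓝 l) ∧ Tendsto y atTop (𝓝 0) := by
  have hanti : AntitoneOn x (Ici 0) := fun r hr s _ hrs =>
    S.le_of_deriv_nonpos hr hrs fun t ht => (hy t (lt_of_le_of_lt hr ht.1)).le
  obtain ⟨l, hl⟩ := exists_tendsto_of_antitoneOn_Ici hanti hx
  obtain ⟨e, he⟩ := exists_tendsto_of_antitoneOn_Ici (φ := radialEnergy G x y) (B := G b)
    (fun r hr s _ hrs => S.energy_le H.hasDerivAt_primitive hr hrs) (fun r hr => by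
      have := H.primitive_left_le (S.lt_of_initial_lt H hc hr).le
      exact le_add_of_nonneg_of_le (by positivity) this)
  have hy0 := S.tendsto_deriv_zero H.continuous_primitive hl he hy
  have hl0 : 0 ≤ l := ge_of_tendsto hl ((eventually_ge_atTop 0).mono hx)
  have hlc : l < c := (le_of_tendsto hl ((eventually_ge_atTop 0).mono fun r hr =>
    hanti self_mem_Ici hr hr)).trans_lt hc
  exact ⟨l, H.eq_zero_or_eq_of_eq_zero hl0 hlc (S.eq_zero_of_tendsto H.lipschitz.continuous hl hy0),
    hl, hy0⟩

end NonlinearRadialSolution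

/-! ### The shooting method -/

/-- The solutions `U α` of the nonlinear equation, with derivative `V α`, indexed by their initial
value `α`. -/
structure ShootingFamily (k : ℕ) (g : ℝ → ℝ) (U V : ℝ → ℝ → ℝ) : Prop where
  solution : ∀ α, NonlinearRadialSolution k g (U α) (V α)
  initial : ∀ α, U α 0 = α

/-- The initial values whose solution becomes negative. -/
def crossingSet (U : ℝ → ℝ → ℝ) : Set ℝ := {α | ∃ r, 0 ≤ r ∧ U α r < 0}

/-- The initial values whose solution reaches negative energy while positive, and is therefore
trapped in the potential well around `b`. -/
def trappingSet (G : ℝ → ℝ) (U V : ℝ → ℝ → ℝ) : Set ℝ :=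
  {α | ∃ r, 0 ≤ r ∧ radialEnergy G (U α) (V α) r < 0 ∧ ∀ s ∈ Icc 0 r, 0 < U α s}

/-- A positive decreasing solution of the nonlinear equation below the level `c`, vanishing at
infinity together with its derivative. -/
structure GroundState (k : ℕ) (g : ℝ → ℝ) (c : ℝ) (x y : ℝ → ℝ) : Prop
    extends RadialSolution k (fun r => g (x r)) x y where
  initial_lt : x 0 < c
  pos : ∀ r, 0 ≤ r → 0 < x r
  deriv_neg : ∀ r, 0 < r → y r < 0
  tendsto : Tendsto x atTop (𝓝 0)
  tendsto_deriv : Tendsto y atTop (𝓝 0)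

namespace NonlinearRadialSolution

variable {k : ℕ} {g G x y : ℝ → ℝ} {L : ℝ≥0} {b c γ r R : ℝ}

lemma le_energy_of_forall_gt (S : NonlinearRadialSolution k g x y)
    (H : BistableNonlinearity g G L b c) (hc : x 0 < c) (hγ : b < γ) (hR : 0 < R)
    (hx : γ < x R) (hRr : R ≤ r) (hxr : 0 ≤ x r) (hy : ∀ t ∈ Ioo 0 r, y t < 0) :
    G γ - k * √(2 * (G c - G b)) * c / R ≤ radialEnergy G x y r := by
  set B := √(2 * (G c - G b))
  have hxc := S.lt_of_initial_lt H hc hR.le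
  have hloss := S.energy_sub_le H.hasDerivAt_primitive hR hRr (B := B) fun t ht => by
    have ht0 := hR.trans ht.1
    exact ⟨neg_le_of_abs_le (S.abs_deriv_le H hc ht0.le), (hy t ⟨ht0, ht.2⟩).le⟩
  have hstart : G γ ≤ radialEnergy G x y R :=
    le_add_of_nonneg_of_le (by positivity) (H.strictMonoOn_primitive
      ⟨hγ.le, (hx.trans hxc).le⟩ ⟨(hγ.trans hx).le, hxc.le⟩ hx).le
  have hdistance : k * B / R * (x R - x r) ≤ k * B / R * c := by
    gcongr
    linarith
  calc G γ - k * B * c / R = G γ - k * B / R * c := by ring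
    _ ≤ radialEnergy G x y R - k * B / R * (x R - x r) := by linarith
    _ ≤ radialEnergy G x y r := hloss

/-- Friction is weak beyond a large `R`, so a solution still above `γ` there has enough energy to
cross zero. -/
lemma exists_neg_of_forall_gt (S : NonlinearRadialSolution k g x y)
    (H : BistableNonlinearity g G L b c) (hc : x 0 < c) (hγ : b < γ) (hR : 0 < R)
    (hRγ : k * √(2 * (G c - G b)) * c / R < G γ) (hx : ∀ s ∈ Icc 0 R, γ < x s) :
    ∃ r, 0 ≤ r ∧ x r < 0 := by
  by_contra! hnonneg
  have hb : b < x 0 := hγ.trans (hx 0 ⟨le_rfl, hR.le⟩)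
  have henergy := fun r (hr : R ≤ r) => S.le_energy_of_forall_gt H hc hγ hR
    (hx R ⟨hR.le, le_rfl⟩) hr (hnonneg r (hR.le.trans hr))
  have hy : ∀ r, 0 < r → y r < 0 := fun r hr => by
    refine S.deriv_neg_of_critical_gt H hb hc (R := r) (fun s hs hs0 hneg => ?_) ⟨hr, le_rfl⟩
    rcases le_or_gt s R with hsR | hsR
    · exact hγ.trans (hx s ⟨hs.1.le, hsR⟩)
    · by_contra! hxb
      have := henergy s hsR.le hneg
      rw [radialEnergy, hs0] at this
      linarith [H.primitive_nonpos hxb]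
  obtain ⟨l, hl, hxl, hyl⟩ := S.exists_tendsto H hc hnonneg hy
  have hGl := ge_of_tendsto (tendsto_radialEnergy H.continuous_primitive hxl hyl)
    ((eventually_ge_atTop R).mono fun r hr => henergy r hr fun t ht => hy t ht.1)
  have : G l ≤ 0 := H.primitive_nonpos (by rcases hl with rfl | rfl; exacts [H.b_pos.le, le_rfl])
  linarith

end NonlinearRadialSolution

namespace ShootingFamily

variable {k : ℕ} {g G : ℝ → ℝ} {L : ℝ≥0} {b c α β r : ℝ} {U V : ℝ → ℝ → ℝ}

section Continuity

variable (Φ : ShootingFamily k g U V) (hg : LipschitzWith L g)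
include Φ hg

lemma tendstoUniformlyOn (α r : ℝ) : TendstoUniformlyOn U (U α) (𝓝 α) (Icc 0 r) ∧
    TendstoUniformlyOn V (V α) (𝓝 α) (Icc 0 r) := by
  have hclose (β) {s} (hs : s ∈ Icc 0 r) := NonlinearRadialSolution.abs_sub_le_and_abs_deriv_sub_le
    hg (Φ.solution α) (Φ.solution β) hs
  simp only [Φ.initial] at hclose
  have hlim : Tendsto (fun β => Real.exp ((L + 2) * r) * |α - β|) (𝓝 α) (𝓝 0) := by
    have : Continuous (fun β => Real.exp ((L + 2) * r) * |α - β|) := by fun_prop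
    simpa using this.tendsto α
  simp only [Metric.tendstoUniformlyOn_iff, Real.dist_eq]
  exact ⟨fun ε hε => (hlim.eventually (gt_mem_nhds hε)).mono fun β hβ s hs =>
      (hclose β hs).1.trans_lt hβ,
    fun ε hε => (hlim.eventually (gt_mem_nhds hε)).mono fun β hβ s hs =>
      (hclose β hs).2.trans_lt hβ⟩

lemma tendsto_solution (hr : 0 ≤ r) : Tendsto (fun β => U β r) (𝓝 α) (𝓝 (U α r)) :=
  (Φ.tendstoUniformlyOn hg α r).1.tendsto_at ⟨hr, le_rfl⟩

lemma tendsto_deriv (hr : 0 ≤ r) : Tendsto (fun β => V β r) (𝓝 α) (𝓝 (V α r)) :=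
  (Φ.tendstoUniformlyOn hg α r).2.tendsto_at ⟨hr, le_rfl⟩

lemma eventually_forall_gt {B : ℝ} (hr : 0 ≤ r) (hB : ∀ s ∈ Icc 0 r, B < U α s) :
    ∀ᶠ β in 𝓝 α, ∀ s ∈ Icc 0 r, B < U β s := by
  obtain ⟨s₀, hs₀, hmin⟩ := isCompact_Icc.exists_isMinOn (nonempty_Icc.2 hr)
    ((Φ.solution α).continuousOn_Icc (b := r) le_rfl)
  filter_upwards [Metric.tendstoUniformlyOn_iff.1 (Φ.tendstoUniformlyOn hg α r).1 _
    (sub_pos.2 (hB s₀ hs₀))] with β hβ s hs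
  have hclose := (abs_lt.1 (hβ s hs)).2
  have hle : U α s₀ ≤ U α s := hmin hs
  linarith

lemma isOpen_crossingSet : IsOpen (crossingSet U) := by
  rw [isOpen_iff_mem_nhds]
  rintro α ⟨r, hr, hneg⟩
  filter_upwards [(Φ.tendsto_solution hg hr).eventually (gt_mem_nhds hneg)] with β hβ
  exact ⟨r, hr, hβ⟩

lemma isOpen_trappingSet (hG : Continuous G) : IsOpen (trappingSet G U V) := by
  rw [isOpen_iff_mem_nhds]
  rintro α ⟨r, hr, henergy, hpos⟩
  have hlim : Tendsto (fun β => radialEnergy G (U β) (V β) r) (𝓝 α)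
      (𝓝 (radialEnergy G (U α) (V α) r)) :=
    (((Φ.tendsto_deriv hg hr).pow 2).div_const 2).add
      ((hG.tendsto _).comp (Φ.tendsto_solution hg hr))
  filter_upwards [hlim.eventually (gt_mem_nhds henergy), Φ.eventually_forall_gt hg hr hpos]
    with β hβ hβpos
  exact ⟨r, hr, hβ, hβpos⟩

end Continuity

section Bistable

variable (Φ : ShootingFamily k g U V) (H : BistableNonlinearity g G L b c)
include Φ H

lemma disjoint_crossingSet_trappingSet : Disjoint (crossingSet U) (trappingSet G U V) := by
  rw [disjoint_left]
  rintro α ⟨s, hs, hneg⟩ ⟨r, hr, henergy, hpos⟩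
  rcases le_or_gt s r with hsr | hsr
  · exact (hpos s ⟨hs, hsr⟩).not_gt hneg
  · have hle := (Φ.solution α).energy_le H.hasDerivAt_primitive hr hsr.le
    rw [radialEnergy, H.primitive_eq_zero_of_nonpos hneg.le] at hle
    linarith [sq_nonneg (V α s)]

lemma lt_of_notMem_trappingSet (h0 : 0 < α) (hα : α ∉ trappingSet G U V) : b < α := by
  by_contra! hb
  refine hα ⟨0, le_rfl, ?_, fun s hs => ?_⟩
  · rw [(Φ.solution α).energy_zero, Φ.initial]
    exact H.primitive_neg ⟨h0, hb⟩
  · rwa [le_antisymm hs.2 hs.1, Φ.initial]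

lemma deriv_neg_of_notMem_trappingSet (h0 : 0 < α) (hc : α < c) (hα : α ∉ trappingSet G U V)
    (hr : 0 < r) (hpos : ∀ s ∈ Icc 0 r, 0 < U α s) : V α r < 0 := by
  refine (Φ.solution α).deriv_neg_of_critical_gt H (R := r)
    (by simpa only [Φ.initial] using Φ.lt_of_notMem_trappingSet H h0 hα) (by rwa [Φ.initial])
    (fun s hs hs0 _ => ?_) ⟨hr, le_rfl⟩
  by_contra! hb
  refine hα ⟨s, hs.1.le, ?_, fun t ht => hpos t ⟨ht.1, ht.2.trans hs.2⟩⟩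
  simpa [radialEnergy, hs0] using H.primitive_neg ⟨hpos s ⟨hs.1.le, hs.2⟩, hb⟩

lemma exists_zero_of_mem_crossingSet (h0 : 0 < α) (hc : α < c) (hα : α ∈ crossingSet U) :
    ∃ r, 0 < r ∧ U α r = 0 ∧ ∀ t ∈ Ico 0 r, 0 < U α t ∧ V α t ≤ 0 := by
  obtain ⟨s, hs, hneg⟩ := id hα
  obtain ⟨r, hr, hUr, hpos⟩ := exists_first_zero (φ := fun t => -U α t) hs
    ((Φ.solution α).continuousOn_Icc le_rfl).neg (by simpa [Φ.initial] using h0)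
    (neg_pos.2 hneg).le
  have hpos : ∀ t ∈ Ico 0 r, 0 < U α t := fun t ht => neg_neg_iff_pos.1 (hpos t ht)
  refine ⟨r, hr.1, neg_eq_zero.1 hUr, fun t ht => ⟨hpos t ht, ?_⟩⟩
  rcases ht.1.eq_or_lt with rfl | ht0
  · exact (Φ.solution α).deriv_zero.le
  · exact (Φ.deriv_neg_of_notMem_trappingSet H h0 hc
      (disjoint_left.1 (Φ.disjoint_crossingSet_trappingSet H) hα) ht0
      fun u hu => hpos u ⟨hu.1, hu.2.trans_lt ht.2⟩).le

lemma groundState_of_notMem (h0 : 0 < α) (hc : α < c) (hcross : α ∉ crossingSet U)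
    (htrap : α ∉ trappingSet G U V) : GroundState k g c (U α) (V α) := by
  have S := Φ.solution α
  have hc' : U α 0 < c := by rwa [Φ.initial]
  have hnonneg : ∀ r, 0 ≤ r → 0 ≤ U α r := fun r hr => by
    by_contra! h
    exact hcross ⟨r, hr, h⟩
  have hpos : ∀ r, 0 ≤ r → 0 < U α r := fun r hr =>
    S.pos_of_nonneg H (by rwa [Φ.initial]) hnonneg hr
  have hneg : ∀ r, 0 < r → V α r < 0 := fun r hr =>
    Φ.deriv_neg_of_notMem_trappingSet H h0 hc htrap hr fun s hs => hpos s hs.1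
  obtain ⟨l, hl, hx, hy⟩ := S.exists_tendsto H hc' hnonneg hneg
  have hG : 0 ≤ G l := ge_of_tendsto (tendsto_radialEnergy H.continuous_primitive hx hy)
    ((eventually_ge_atTop 0).mono fun r hr => by
      by_contra! henergy
      exact htrap ⟨r, hr, henergy, fun s hs => hpos s hs.1⟩)
  rcases hl with rfl | rfl
  · exact ⟨S, hc', hpos, hneg, hx, hy⟩
  · exact absurd (H.primitive_neg ⟨H.b_pos, le_rfl⟩) hG.not_gt

lemma eq_right (hr : 0 ≤ r) : U c r = c := by
  have hconst : NonlinearRadialSolution k g (fun _ => c) (fun _ => 0) :=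
    ⟨continuousOn_const, continuousOn_const, rfl, fun r _ => hasDerivAt_const r c,
      fun r _ => (hasDerivAt_const r (0 : ℝ)).congr_deriv (by simp [H.eq_zero_right])⟩
  exact NonlinearRadialSolution.eq_of_initial_eq H.lipschitz (Φ.solution c) hconst (Φ.initial c) hr

lemma exists_mem_crossingSet : ∃ α ∈ Ioo b c, α ∈ crossingSet U := by
  obtain ⟨γ, hγ, hGγ⟩ := H.exists_primitive_pos
  set B := √(2 * (G c - G b))
  have hc := H.c_pos
  obtain ⟨R, hR, hRγ⟩ : ∃ R : ℝ, 0 < R ∧ k * B * c / R < G γ := by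
    refine ⟨k * B * c / G γ + 1, by positivity, ?_⟩
    rw [div_lt_iff₀ (by positivity), mul_add, mul_div_cancel₀ _ hGγ.ne']
    linarith
  have hnear := Φ.eventually_forall_gt H.lipschitz hR.le (α := c) (B := γ)
    fun s hs => by rw [Φ.eq_right H hs.1]; exact hγ.2
  obtain ⟨α, hα, hmem⟩ :=
    ((hnear.filter_mono nhdsWithin_le_nhds).and (Ioo_mem_nhdsLT H.b_lt_c)).exists
  exact ⟨α, hmem, (Φ.solution α).exists_neg_of_forall_gt H (by rw [Φ.initial]; exact hmem.2)
    hγ.1 hR hRγ hα⟩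

/-- Both sets are open and nonempty in the interval `(0, c)`, which is connected. -/
lemma exists_groundState : ∃ α, GroundState k g c (U α) (V α) := by
  by_contra! hnone
  obtain ⟨α, hα, hcross⟩ := Φ.exists_mem_crossingSet H
  have htrap : b ∈ trappingSet G U V := by
    by_contra h
    exact (Φ.lt_of_notMem_trappingSet H H.b_pos h).false
  have hcover : Ioo 0 c ⊆ crossingSet U ∪ trappingSet G U V := fun β hβ => by
    by_contra h
    rw [mem_union, not_or] at h
    exact hnone β (Φ.groundState_of_notMem H hβ.1 hβ.2 h.1 h.2)
  obtain ⟨β, -, hβ⟩ := isPreconnected_Ioo _ _ (Φ.isOpen_crossingSet H.lipschitz)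
    (Φ.isOpen_trappingSet H.lipschitz H.continuous_primitive) hcover
    ⟨α, ⟨H.b_pos.trans hα.1, hα.2⟩, hcross⟩ ⟨b, ⟨H.b_pos, H.b_lt_c⟩, htrap⟩
  exact disjoint_left.1 (Φ.disjoint_crossingSet_trappingSet H) hβ.1 hβ.2

end Bistable

end ShootingFamily

/-! ### Crossing nonlinearities -/

/-- The source term of the linear equation satisfied by `r x' + l x` along solutions `x`. -/
def linearizedSource (g g' : ℝ → ℝ) (l x : ℝ) : ℝ := l * (x * g' x - g x) - 2 * g x

/-- The density of the Pohozaev identity in dimension `k + 1`. -/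
noncomputable def pohozaevDensity (k : ℕ) (g G : ℝ → ℝ) (x : ℝ) : ℝ :=
  (k + 1) * G x - (k - 1) / 2 * (x * g x)

/-- A bistable nonlinearity, differentiable on `(0, c)` and with slope at most `-m ^ 2` near `0`,
whose linearized sources and Pohozaev densities change sign at most once on `(0, c)`. -/
structure CrossingNonlinearity (g g' G : ℝ → ℝ) (L : ℝ≥0) (b c δ m : ℝ) : Prop
    extends BistableNonlinearity g G L b c where
  hasDerivAt : ∀ x ∈ Ioo 0 c, HasDerivAt g (g' x) x
  continuousOn_deriv : ContinuousOn g' (Ioo 0 c)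
  δ_pos : 0 < δ
  δ_lt : δ < b
  m_pos : 0 < m
  deriv_le : ∀ x ∈ Ioc 0 δ, g' x ≤ -m ^ 2
  linearizedSource_crossing : ∀ l s t, 0 < l → 0 < s → s < t → t < c →
    linearizedSource g g' l s ≤ 0 → linearizedSource g g' l t < 0
  pohozaevDensity_crossing : ∀ (k : ℕ) s t, 0 < s → s < t → t < c →
    0 ≤ pohozaevDensity k g G s → 0 < pohozaevDensity k g G t
  superquadratic_or_sublinear : ∀ u ∈ Ioo 0 c, 2 * G u < u * g u ∨
    ∀ t ∈ Ico u c, t * g' t - g t < 0 ∧ 0 < g t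

namespace CrossingNonlinearity

variable {g g' G : ℝ → ℝ} {L : ℝ≥0} {b c δ m x : ℝ} (H : CrossingNonlinearity g g' G L b c δ m)
include H

lemma abs_deriv_le (hx : x ∈ Ioo 0 c) : |g' x| ≤ L :=
  (H.hasDerivAt x hx).le_of_lipschitz H.lipschitz

lemma mem_Ioo_of_le (h0 : 0 < x) (hx : x ≤ δ) : x ∈ Ioo 0 c :=
  ⟨h0, hx.trans_lt (H.δ_lt.trans H.b_lt_c)⟩

lemma antitoneOn : AntitoneOn g (Icc 0 δ) := fun _ hx _ hy hxy =>
  le_of_hasDerivAt_nonpos hxy H.lipschitz.continuous.continuousOn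
    (fun t ht => H.hasDerivAt t (H.mem_Ioo_of_le (hx.1.trans_lt ht.1) (ht.2.le.trans hy.2)))
    fun t ht => (H.deriv_le t ⟨hx.1.trans_lt ht.1, ht.2.le.trans hy.2⟩).trans
      (neg_nonpos.2 (sq_nonneg m))

lemma le_neg_sq_mul (hx : x ∈ Icc 0 δ) : g x ≤ -m ^ 2 * x := by
  have hle := le_of_hasDerivAt_nonpos (φ := fun t => g t - -m ^ 2 * t) hx.1
    (H.lipschitz.continuous.sub (continuous_const.mul continuous_id)).continuousOn
    (fun t ht => (H.hasDerivAt t (H.mem_Ioo_of_le ht.1 (ht.2.le.trans hx.2))).sub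
      ((hasDerivAt_id t).const_mul _)) fun t ht => by
        linarith [H.deriv_le t ⟨ht.1, ht.2.le.trans hx.2⟩]
  rw [H.eq_zero_of_nonpos 0 le_rfl] at hle
  linarith

lemma two_mul_primitive_le (hx : x ∈ Icc 0 δ) : 2 * G x ≤ -(m * x) ^ 2 := by
  have hle := le_of_hasDerivAt_nonpos (φ := fun t => 2 * G t + (m * t) ^ 2) hx.1
    ((continuous_const.mul H.continuous_primitive).add (by fun_prop)).continuousOn
    (fun t _ => ((H.hasDerivAt_primitive t).const_mul 2).add
      (((hasDerivAt_id t).const_mul m).pow 2)) fun t ht => by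
        have := H.le_neg_sq_mul ⟨ht.1.le, ht.2.le.trans hx.2⟩
        simp only [id, Nat.cast_ofNat, Nat.add_one_sub_one, pow_one, mul_one]
        linarith
  simp only [H.primitive_zero] at hle
  linarith

end CrossingNonlinearity

/-! ### Decay of ground states -/

lemma tendsto_pow_mul_exp_neg_const_mul (j : ℕ) {m : ℝ} (hm : 0 < m) :
    Tendsto (fun r : ℝ => r ^ j * Real.exp (-(m * r))) atTop (𝓝 0) := by
  have hlim := ((Real.tendsto_pow_mul_exp_neg_atTop_nhds_zero j).comp
    (tendsto_id.const_mul_atTop hm)).const_mul (m ^ j)⁻¹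
  rw [mul_zero] at hlim
  refine hlim.congr fun r => ?_
  simp only [Function.comp, id, mul_pow]
  field_simp

namespace GroundState

variable {k : ℕ} {g g' G x y : ℝ → ℝ} {L : ℝ≥0} {b c δ m r s : ℝ} (W : GroundState k g c x y)
include W

lemma solution : NonlinearRadialSolution k g x y := W.toRadialSolution

lemma lt_of_lt (hr : 0 ≤ r) (hrs : r < s) : x s < x r :=
  W.lt_of_deriv_neg hr hrs fun _ ht => W.deriv_neg _ (hr.trans_lt ht.1)

lemma le_of_le (hr : 0 ≤ r) (hrs : r ≤ s) : x s ≤ x r :=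
  W.le_of_deriv_nonpos hr hrs fun _ ht => (W.deriv_neg _ (hr.trans_lt ht.1)).le

lemma mem_Ioo (hr : 0 ≤ r) : x r ∈ Ioo 0 c :=
  ⟨W.pos r hr, (W.le_of_le le_rfl hr).trans_lt W.initial_lt⟩

lemma exists_forall_lt (hδ : 0 < δ) : ∃ R, 0 < R ∧ ∀ r, R ≤ r → x r < δ := by
  obtain ⟨R, hR, hR0⟩ :=
    ((W.tendsto.eventually (gt_mem_nhds hδ)).and (eventually_gt_atTop 0)).exists
  exact ⟨R, hR0, fun r hr => (W.le_of_le hR0.le hr).trans_lt hR⟩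

section Bistable

variable (H : BistableNonlinearity g G L b c)
include H

lemma energy_nonneg (hr : 0 ≤ r) : 0 ≤ radialEnergy G x y r := by
  have hlim := tendsto_radialEnergy H.continuous_primitive W.tendsto W.tendsto_deriv
  rw [H.primitive_zero] at hlim
  exact le_of_tendsto hlim ((eventually_ge_atTop r).mono fun s hs =>
    W.solution.energy_le H.hasDerivAt_primitive hr hs)

lemma lt_initial : b < x 0 := by
  have henergy := W.energy_nonneg H le_rfl
  rw [W.solution.energy_zero] at henergy
  by_contra! hb
  exact (H.primitive_neg ⟨W.pos 0 le_rfl, hb⟩).not_ge henergy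

lemma neg_deriv_le (hr : 1 < r) (hx : x (r - 1) ≤ b) : -y r ≤ x (r - 1) := by
  have hr0 : 0 < r - 1 := sub_pos.2 hr
  obtain ⟨s, hs, hslope⟩ := exists_hasDerivAt_eq_slope x y (sub_one_lt r)
    (W.continuousOn_Icc hr0.le) fun t ht => W.hasDerivAt t (hr0.trans ht.1)
  have hs0 : 0 < s := hr0.trans hs.1
  have hconvex : y s ≤ y r := le_of_hasDerivAt_nonneg hs.2.le (W.continuousOn_deriv_Icc hs0.le)
    (fun t ht => W.hasDerivAt_deriv t (hs0.trans ht.1)) fun t ht => by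
      have ht0 : 0 < t := hs0.trans ht.1
      have hg : g (x t) < 0 := H.neg _
        ⟨W.pos t ht0.le, (W.lt_of_lt hr0.le (hs.1.trans ht.1)).trans_le hx⟩
      have := mul_nonneg (show 0 ≤ k / t by positivity) (neg_nonneg.2 (W.deriv_neg t ht0).le)
      linarith
  rw [sub_sub_cancel, div_one] at hslope
  linarith [W.pos r (by linarith)]

end Bistable

section Crossing

variable (H : CrossingNonlinearity g g' G L b c δ m)
include H

lemma deriv_le_neg_mul (hr : 0 < r) (hx : x r ≤ δ) : y r ≤ -(m * x r) := by
  have henergy := W.energy_nonneg H.toBistableNonlinearity hr.le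
  have hx0 := W.pos r hr.le
  have hG := H.two_mul_primitive_le ⟨hx0.le, hx⟩
  rw [radialEnergy] at henergy
  have hy := abs_le_of_sq_le_sq (show (m * x r) ^ 2 ≤ (-y r) ^ 2 by linarith [neg_sq (y r)])
    (neg_nonneg.2 (W.deriv_neg r hr).le)
  linarith [le_abs_self (m * x r)]

lemma le_mul_exp (hr : 0 < r) (hx : x r ≤ δ) (hrs : r ≤ s) :
    x s ≤ x r * Real.exp (m * r) * Real.exp (-(m * s)) := by
  have hanti := le_of_hasDerivAt_nonpos (φ := fun t => x t * Real.exp (m * t)) hrs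
    (by have := W.continuousOn_Icc (b := s) hr.le; fun_prop)
    (fun t ht => (W.hasDerivAt t (hr.trans ht.1)).mul (hasDerivAt_exp_mul m t)) fun t ht => by
      have hy := W.deriv_le_neg_mul H (hr.trans ht.1) ((W.le_of_le hr.le ht.1.le).trans hx)
      have := mul_nonneg (neg_nonneg.2 (show y t + m * x t ≤ 0 by linarith))
        (Real.exp_pos (m * t)).le
      linarith
  rwa [Real.exp_neg, ← div_eq_mul_inv, le_div_iff₀ (Real.exp_pos _)]

lemma tendsto_pow_mul (j : ℕ) : Tendsto (fun r => r ^ j * x r) atTop (𝓝 0) := by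
  obtain ⟨R, hR, hx⟩ := W.exists_forall_lt H.δ_pos
  have hlim := (tendsto_pow_mul_exp_neg_const_mul j H.m_pos).const_mul (x R * Real.exp (m * R))
  rw [mul_zero] at hlim
  refine squeeze_zero' ?_ ?_ hlim <;> filter_upwards [eventually_ge_atTop R] with r hr
  · have := W.pos r (hR.le.trans hr)
    have := hR.trans_le hr
    positivity
  · rw [mul_left_comm]
    exact mul_le_mul_of_nonneg_left (W.le_mul_exp H hR (hx R le_rfl).le hr)
      (pow_nonneg (hR.le.trans hr) j)

lemma tendsto_pow_mul_deriv (j : ℕ) : Tendsto (fun r => r ^ j * y r) atTop (𝓝 0) := by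
  obtain ⟨R, hR, hx⟩ := W.exists_forall_lt H.δ_pos
  have hlim := ((W.tendsto_pow_mul H j).comp (tendsto_atTop_add_const_right _ (-1 : ℝ)
    tendsto_id)).const_mul (2 ^ j)
  rw [mul_zero] at hlim
  refine squeeze_zero_norm' ?_ hlim
  filter_upwards [eventually_ge_atTop (R + 1), eventually_ge_atTop 2] with r hr hr2
  have hy := W.neg_deriv_le H.toBistableNonlinearity (by linarith)
    (((hx (r - 1) (by linarith)).trans H.δ_lt).le)
  have hr0 : 0 < r := by linarith
  rw [norm_mul, Real.norm_of_nonneg (pow_nonneg hr0.le j),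
    Real.norm_of_nonpos (W.deriv_neg r hr0).le]
  calc r ^ j * -y r ≤ (2 * (r - 1)) ^ j * x (r - 1) := by
        exact mul_le_mul (pow_le_pow_left₀ hr0.le (by linarith) j) hy
          (neg_nonneg.2 (W.deriv_neg r hr0).le) (pow_nonneg (by linarith) j)
    _ = 2 ^ j * ((fun r => r ^ j * x r) ∘ fun r => id r + -1) r := by
        simp only [Function.comp, id, mul_pow, sub_eq_add_neg, mul_assoc]

lemma tendsto_pow_mul_source (j : ℕ) : Tendsto (fun r => r ^ j * g (x r)) atTop (𝓝 0) := by
  have hlim := (W.tendsto_pow_mul H j).abs.const_mul (L : ℝ)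
  rw [abs_zero, mul_zero] at hlim
  refine squeeze_zero_norm (fun r => ?_) hlim
  rw [Real.norm_eq_abs, abs_mul, abs_mul, mul_left_comm]
  exact mul_le_mul_of_nonneg_left (H.abs_le (x r)) (abs_nonneg _)

-- Nonnegativity of the energy gives `-y ^ 2 / 2 ≤ G x`, while `G x ≤ 0` as soon as `x ≤ b`.
lemma tendsto_pow_mul_primitive (j : ℕ) : Tendsto (fun r => r ^ j * G (x r)) atTop (𝓝 0) := by
  have hlim := ((W.tendsto_pow_mul_deriv H j).mul W.tendsto_deriv).div_const 2
  simp only [mul_zero, zero_div] at hlim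
  obtain ⟨R, hR, hx⟩ := W.exists_forall_lt H.b_pos
  refine squeeze_zero_norm' ?_ hlim
  filter_upwards [eventually_ge_atTop R] with r hr
  have hr0 : 0 ≤ r := hR.le.trans hr
  have henergy := W.energy_nonneg H.toBistableNonlinearity hr0
  rw [norm_mul, Real.norm_of_nonneg (pow_nonneg hr0 j),
    Real.norm_of_nonpos (H.primitive_nonpos (hx r hr).le)]
  calc r ^ j * -G (x r) ≤ r ^ j * (y r ^ 2 / 2) := by
        rw [radialEnergy] at henergy
        gcongr
        linarith
    _ = r ^ j * y r * y r / 2 := by ring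

end Crossing

end GroundState

/-! ### The Pohozaev function and the logarithmic slope -/

/-- The Pohozaev function of a solution `x` with derivative `y`. -/
noncomputable def pohozaev (k : ℕ) (G x y : ℝ → ℝ) (r : ℝ) : ℝ :=
  r ^ k * (r * radialEnergy G x y r + (k - 1) / 2 * (x r * y r))

/-- The logarithmic slope `θ = -r x' / x` of a solution `x` with derivative `y`. -/
noncomputable def logSlope (x y : ℝ → ℝ) (r : ℝ) : ℝ := -(r * y r / x r)

/-- The function `r ^ k x ^ 2 θ'`, where `θ` is the logarithmic slope. -/
def slopeGrowth (k : ℕ) (g x y : ℝ → ℝ) (r : ℝ) : ℝ :=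
  r ^ k * (r * y r ^ 2 + r * (x r * g (x r)) + (k - 1) * (x r * y r))

namespace GroundState

variable {k : ℕ} {g g' G x y : ℝ → ℝ} {L : ℝ≥0} {b c δ m r s : ℝ} (W : GroundState k g c x y)

section Pohozaev

include W

lemma hasDerivAt_pohozaev (hG : ∀ z, HasDerivAt G (g z) z) (hr : 0 < r) :
    HasDerivAt (pohozaev k G x y) (r ^ k * pohozaevDensity k g G (x r)) r := by
  have hy := W.hasDerivAt_deriv r hr
  refine ((hasDerivAt_pow_div k hr).mul (((hasDerivAt_id r).mul
    (W.solution.hasDerivAt_energy hG hr)).add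
      (((W.hasDerivAt r hr).mul hy).const_mul (((k : ℝ) - 1) / 2)))).congr_deriv ?_
  simp only [radialEnergy, pohozaevDensity, id, Pi.mul_apply, Pi.add_apply]
  field_simp
  ring

variable (H : CrossingNonlinearity g g' G L b c δ m)
include H

lemma continuousOn_pohozaev : ContinuousOn (pohozaev k G x y) (Ici 0) :=
  (continuous_pow k).continuousOn.mul
    ((continuousOn_id.mul (W.solution.continuousOn_energy H.hasDerivAt_primitive)).add
      (continuousOn_const.mul (W.continuousOn.mul W.continuousOn_deriv)))

lemma tendsto_pohozaev : Tendsto (pohozaev k G x y) atTop (𝓝 0) := by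
  have hkinetic := ((W.tendsto_pow_mul_deriv H (k + 1)).mul W.tendsto_deriv).div_const 2
  have hboundary := ((W.tendsto_pow_mul H k).mul W.tendsto_deriv).const_mul (((k : ℝ) - 1) / 2)
  have hlim := (hkinetic.add (W.tendsto_pow_mul_primitive H (k + 1))).add hboundary
  simp only [mul_zero, zero_div, add_zero] at hlim
  refine hlim.congr fun r => ?_
  simp only [pohozaev, radialEnergy]
  ring

lemma pohozaev_lt_of_density_nonpos {t : ℝ} (hr : 0 < r) (hrs : r ≤ s) (hst : s < t)
    (hQ : pohozaevDensity k g G (x r) ≤ 0) : pohozaev k G x y t < pohozaev k G x y s := by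
  have hs : 0 < s := hr.trans_le hrs
  refine lt_of_hasDerivAt_neg hst ((W.continuousOn_pohozaev H).mono fun _ hu => hs.le.trans hu.1)
    (fun u hu => W.hasDerivAt_pohozaev H.hasDerivAt_primitive (hs.trans hu.1)) fun u hu => ?_
  have hu0 : 0 < u := hs.trans hu.1
  refine mul_neg_of_pos_of_neg (pow_pos hu0 k) ?_
  by_contra! hQu
  exact (H.pohozaevDensity_crossing k (x u) (x r) (W.pos u hu0.le)
    (W.lt_of_lt hr.le (hrs.trans_lt hu.1)) (W.mem_Ioo hr.le).2 hQu).not_ge hQ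

-- The density is positive first and negative afterwards, and the function vanishes at both ends.
lemma pohozaev_pos (hr : 0 < r) : 0 < pohozaev k G x y r := by
  rcases lt_or_ge 0 (pohozaevDensity k g G (x r)) with hQ | hQ
  · have hlt := lt_of_hasDerivAt_pos hr ((W.continuousOn_pohozaev H).mono fun _ ht => ht.1)
      (fun t ht => W.hasDerivAt_pohozaev H.hasDerivAt_primitive ht.1)
      fun t ht => mul_pos (pow_pos ht.1 k) (H.pohozaevDensity_crossing k (x r) (x t)
        (W.pos r hr.le) (W.lt_of_lt ht.1.le ht.2) (W.mem_Ioo ht.1.le).2 hQ.le)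
    simpa [pohozaev, W.deriv_zero] using hlt
  · obtain ⟨s, hrs⟩ := exists_gt r
    refine (le_of_tendsto (W.tendsto_pohozaev H) ?_).trans_lt
      (W.pohozaev_lt_of_density_nonpos H hr le_rfl hrs hQ)
    filter_upwards [eventually_gt_atTop s] with t ht
    exact (W.pohozaev_lt_of_density_nonpos H hr hrs.le ht hQ).le

end Pohozaev

variable (H : CrossingNonlinearity g g' G L b c δ m)
include W H

lemma hasDerivAt_slopeGrowth (hr : 0 < r) :
    HasDerivAt (slopeGrowth k g x y)
      (r ^ k * (2 * (x r * g (x r)) + r * y r * (x r * g' (x r) - g (x r)))) r := by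
  have hx := W.hasDerivAt r hr
  have hy := W.hasDerivAt_deriv r hr
  have hg := (H.hasDerivAt (x r) (W.mem_Ioo hr.le)).comp r hx
  refine ((hasDerivAt_pow_div k hr).mul ((((hasDerivAt_id r).mul (hy.pow 2)).add
    ((hasDerivAt_id r).mul (hx.mul hg))).add
      ((hx.mul hy).const_mul ((k : ℝ) - 1)))).congr_deriv ?_
  simp only [id, Function.comp_apply, Pi.mul_apply, Pi.add_apply, Pi.pow_apply]
  field_simp
  ring

lemma continuousOn_slopeGrowth : ContinuousOn (slopeGrowth k g x y) (Ici 0) := by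
  have hx := W.continuousOn
  have hy := W.continuousOn_deriv
  have hg := H.lipschitz.continuous.comp_continuousOn hx
  exact (continuous_pow k).continuousOn.mul (((continuousOn_id.mul (hy.pow 2)).add
    (continuousOn_id.mul (hx.mul hg))).add (continuousOn_const.mul (hx.mul hy)))

lemma slopeGrowth_pos (hr : 0 < r) : 0 < slopeGrowth k g x y r := by
  rcases H.superquadratic_or_sublinear (x r) (W.mem_Ioo hr.le) with hquad | hsub
  · calc 0 < 2 * pohozaev k G x y r + r ^ k * (r * (x r * g (x r) - 2 * G (x r))) :=
          add_pos (mul_pos two_pos (W.pohozaev_pos H hr))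
            (mul_pos (pow_pos hr k) (mul_pos hr (sub_pos.2 hquad)))
      _ = slopeGrowth k g x y r := by
          simp only [slopeGrowth, pohozaev, radialEnergy]
          ring
  · have hlt := lt_of_hasDerivAt_pos hr ((W.continuousOn_slopeGrowth H).mono fun _ ht => ht.1)
      (fun t ht => W.hasDerivAt_slopeGrowth H ht.1) fun t ht => by
        have hx := W.mem_Ioo ht.1.le
        obtain ⟨hslope, hg⟩ := hsub (x t) ⟨W.le_of_le ht.1.le ht.2.le, hx.2⟩
        have hry : t * y t < 0 := mul_neg_of_pos_of_neg ht.1 (W.deriv_neg t ht.1)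
        exact mul_pos (pow_pos ht.1 k)
          (add_pos (mul_pos two_pos (mul_pos hx.1 hg)) (mul_pos_of_neg_of_neg hry hslope))
    simpa [slopeGrowth, W.deriv_zero] using hlt

lemma strictMonoOn_logSlope : StrictMonoOn (logSlope x y) (Ioi 0) := by
  intro r hr s _ hrs
  have hr0 : 0 < r := hr
  refine lt_of_hasDerivAt_pos (φ' := fun t => slopeGrowth k g x y t / (t ^ k * x t ^ 2)) hrs
    ((continuousOn_id.mul (W.continuousOn_deriv_Icc hr0.le)).div (W.continuousOn_Icc hr0.le)
      fun t ht => (W.pos t (hr0.le.trans ht.1)).ne').neg (fun t ht => ?_) fun t ht => ?_ <;>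
    have ht0 := hr0.trans ht.1 <;> have hx := W.pos t ht0.le
  · refine ((((hasDerivAt_id t).mul (W.hasDerivAt_deriv t ht0)).div
      (W.hasDerivAt t ht0) hx.ne').neg).congr_deriv ?_
    simp only [slopeGrowth, id, Pi.mul_apply]
    field_simp
    ring
  · exact div_pos (W.slopeGrowth_pos H ht0) (mul_pos (pow_pos ht0 k) (pow_pos hx 2))

end GroundState

/-! ### Signs near a simple zero -/

section SimpleZero

variable {φ : ℝ → ℝ} {a d r : ℝ}

lemma eventually_pos_left_of_hasDerivAt_neg (h : HasDerivAt φ d r) (h0 : φ r = 0) (hd : d < 0) :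
    ∀ᶠ t in 𝓝[<] r, 0 < φ t := by
  filter_upwards [self_mem_nhdsWithin, nhdsWithin_le_nhds
    (eventually_nhdsWithin_sign_eq_of_deriv_neg (h.deriv.symm ▸ hd) h0)] with t ht hsign
  rwa [sign_pos (sub_pos.2 ht), sign_eq_one_iff] at hsign

lemma eventually_neg_right_of_hasDerivAt_neg (h : HasDerivAt φ d r) (h0 : φ r = 0) (hd : d < 0) :
    ∀ᶠ t in 𝓝[>] r, φ t < 0 := by
  filter_upwards [self_mem_nhdsWithin, nhdsWithin_le_nhds
    (eventually_nhdsWithin_sign_eq_of_deriv_neg (h.deriv.symm ▸ hd) h0)] with t ht hsign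
  rwa [sign_neg (sub_neg.2 ht), sign_eq_neg_one_iff] at hsign

lemma deriv_nonneg_of_neg_left (h : HasDerivAt φ d r) (h0 : φ r = 0) (har : a < r)
    (hneg : ∀ t ∈ Ioo a r, φ t < 0) : 0 ≤ d := by
  by_contra! hd
  obtain ⟨t, ht, hat⟩ :=
    ((eventually_pos_left_of_hasDerivAt_neg h h0 hd).and (Ioo_mem_nhdsLT har)).exists
  exact (hneg t hat).not_gt ht

lemma exists_next_zero {b : ℝ} (h : HasDerivAt φ d a) (h0 : φ a = 0) (hd : d < 0) (hab : a < b)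
    (hc : ContinuousOn φ (Icc a b)) (hb : 0 ≤ φ b) :
    ∃ e ∈ Ioc a b, φ e = 0 ∧ ∀ t ∈ Ioo a e, φ t < 0 := by
  obtain ⟨e, he, hneg⟩ :=
    mem_nhdsGT_iff_exists_Ioo_subset.1 (eventually_neg_right_of_hasDerivAt_neg h h0 hd)
  obtain ⟨s, has, hs⟩ := exists_between (lt_min he hab)
  have hse : s < e := hs.trans_le (min_le_left _ _)
  obtain ⟨z, hz, hz0, hzneg⟩ := exists_first_zero (hs.le.trans (min_le_right _ _))
    (hc.mono (Icc_subset_Icc_left has.le)) (hneg ⟨has, hse⟩) hb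
  refine ⟨z, ⟨has.trans hz.1, hz.2⟩, hz0, fun t ht => ?_⟩
  rcases lt_or_ge t s with hts | hts
  · exact hneg ⟨ht.1, hts.trans hse⟩
  · exact hzneg t ⟨hts, ht.2⟩

end SimpleZero

/-! ### Wronskians -/

/-- The Wronskian `r ^ k (η' φ - η φ')` of `η` and `φ`, with `ζ = η'` and `ψ = φ'`. -/
def radialWronskian (k : ℕ) (η ζ φ ψ : ℝ → ℝ) (r : ℝ) : ℝ := r ^ k * (ζ r * φ r - η r * ψ r)

lemma RadialSolution.hasDerivAt_radialWronskian {k : ℕ} {h φ ψ η ζ : ℝ → ℝ} {d r : ℝ}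
    (s : RadialSolution k h φ ψ) (hr : 0 < r) (hη : HasDerivAt η (ζ r) r)
    (hζ : HasDerivAt ζ d r) : HasDerivAt (radialWronskian k η ζ φ ψ)
      (r ^ k * ((d + k / r * ζ r) * φ r + η r * h r)) r := by
  refine ((hasDerivAt_pow_div k hr).mul ((hζ.mul (s.hasDerivAt r hr)).sub
    (hη.mul (s.hasDerivAt_deriv r hr)))).congr_deriv ?_
  simp only [Pi.sub_apply, Pi.mul_apply]
  ring

-- Otherwise `|φ| ≤ C`, the term `r ^ k ζ φ` vanishes at infinity, and `ψ ≤ -1` eventually.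
lemma exists_nonpos_of_radialWronskian_le {k : ℕ} {η ζ φ ψ : ℝ → ℝ} {C d : ℝ} (hd : 0 < d)
    (hη : Tendsto (fun r => r ^ k * η r) atTop (𝓝 0))
    (hζ : Tendsto (fun r => r ^ k * ζ r) atTop (𝓝 0)) (hηneg : ∀ r, 0 < r → η r < 0)
    (hφ : ∀ r, 0 < r → HasDerivAt φ (ψ r) r) (hC : ∀ᶠ r in atTop, φ r ≤ C)
    (hW : ∀ᶠ r in atTop, radialWronskian k η ζ φ ψ r ≤ -d) : ∃ r, 0 < r ∧ φ r ≤ 0 := by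
  by_contra! hpos
  have hprod : Tendsto (fun r => r ^ k * ζ r * φ r) atTop (𝓝 0) :=
    hζ.zero_mul_isBoundedUnder_le ⟨C, eventually_map.2 <| by
      filter_upwards [hC, eventually_gt_atTop 0] with r hr hr0
      exact (Real.norm_of_nonneg (hpos r hr0).le).trans_le hr⟩
  have hψ : ∀ᶠ r in atTop, 0 < r ∧ ψ r ≤ -1 := by
    filter_upwards [hW, hprod.eventually (lt_mem_nhds (show -(d / 2) < 0 by linarith)),
      hη.eventually (lt_mem_nhds (show -(d / 2) < 0 by linarith)),
      eventually_gt_atTop 0] with r hWr hζr hηr hr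
    refine ⟨hr, ?_⟩
    by_contra! hψr
    have hneg : r ^ k * η r < 0 := mul_neg_of_pos_of_neg (pow_pos hr k) (hηneg r hr)
    have := mul_lt_mul_of_neg_left hψr hneg
    rw [radialWronskian] at hWr
    linarith
  obtain ⟨R, hR⟩ := hψ.exists_forall_of_atTop
  have hR0 : 0 < R := (hR R le_rfl).1
  have hφR := hpos R hR0
  have hle := le_of_hasDerivAt_nonpos (φ := fun t => φ t + t) (show R ≤ R + φ R by linarith)
    (fun t ht => ((hφ t (hR0.trans_le ht.1)).add (hasDerivAt_id t)).continuousAt.continuousWithinAt)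
    (fun t ht => (hφ t (hR0.trans ht.1)).add (hasDerivAt_id t))
    fun t ht => by linarith [(hR t ht.1.le).2]
  linarith [hpos (R + φ R) (by linarith)]

/-- The Wronskian of the derivative `x' = y` of a solution `x` with `φ`. -/
noncomputable def translationWronskian (k : ℕ) (g x y φ ψ : ℝ → ℝ) : ℝ → ℝ :=
  radialWronskian k y (fun r => -(k / r) * y r - g (x r)) φ ψ

/-- The generator `r x' + l x` of the dilations `x ↦ s ^ l x (s r)`, where `x' = y`. -/
def dilationMode (l : ℝ) (x y : ℝ → ℝ) (r : ℝ) : ℝ := r * y r + l * x r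

/-- The Wronskian of the dilation mode of a solution `x` with `φ`. -/
def dilationWronskian (k : ℕ) (g : ℝ → ℝ) (l : ℝ) (x y φ ψ : ℝ → ℝ) : ℝ → ℝ :=
  radialWronskian k (dilationMode l x y) (fun r => (1 + l - k) * y r - r * g (x r)) φ ψ

/-! ### The linearized equation at a ground state -/

/-- A solution `φ` of the equation linearized at `x`, with derivative `ψ` and `φ 0 = 1`. -/
structure LinearizedSolution (k : ℕ) (g' x φ ψ : ℝ → ℝ) : Prop
    extends RadialSolution k (fun r => g' (x r) * φ r) φ ψ where
  initial : φ 0 = 1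

/-- `r` is the first zero of `φ` on `[0, ∞)`, and `φ` is positive before it. -/
structure IsFirstZero (φ : ℝ → ℝ) (r : ℝ) : Prop where
  pos : 0 < r
  eq_zero : φ r = 0
  forall_pos : ∀ t ∈ Ico 0 r, 0 < φ t

namespace GroundState

variable {k : ℕ} {g g' G x y φ ψ : ℝ → ℝ} {L : ℝ≥0} {b c δ m r s t l : ℝ}
  (W : GroundState k g c x y)
include W

lemma hasDerivAt_dilationMode (hr : 0 < r) :
    HasDerivAt (dilationMode l x y) ((1 + l - k) * y r - r * g (x r)) r := by
  refine (((hasDerivAt_id r).mul (W.hasDerivAt_deriv r hr)).add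
    ((W.hasDerivAt r hr).const_mul l)).congr_deriv ?_
  simp only [id]
  field_simp
  ring

lemma logSlope_pos (hr : 0 < r) : 0 < logSlope x y r :=
  neg_pos.2 (div_neg_of_neg_of_pos (mul_neg_of_pos_of_neg hr (W.deriv_neg r hr)) (W.pos r hr.le))

lemma dilationMode_logSlope (hr : 0 ≤ r) : dilationMode (logSlope x y r) x y r = 0 := by
  have := W.pos r hr
  rw [dilationMode, logSlope]
  field_simp
  ring

lemma dilationWronskian_eq_zero (Z : IsFirstZero φ r) :
    dilationWronskian k g (logSlope x y r) x y φ ψ r = 0 := by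
  rw [dilationWronskian, radialWronskian, W.dilationMode_logSlope Z.pos.le, Z.eq_zero]
  ring

variable (H : CrossingNonlinearity g g' G L b c δ m)
include H

lemma dilationMode_logSlope_neg (hr : 0 < r) (hrs : r < s) :
    dilationMode (logSlope x y r) x y s < 0 := by
  have hx := W.pos s (hr.trans hrs).le
  have hslope : s * y s / x s < -logSlope x y r :=
    lt_neg_of_lt_neg (W.strictMonoOn_logSlope H hr (hr.trans hrs) hrs)
  rw [div_lt_iff₀ hx] at hslope
  rw [dilationMode]
  linarith

lemma hasDerivAt_source (hr : 0 < r) : HasDerivAt (fun r => g (x r)) (g' (x r) * y r) r :=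
  (H.hasDerivAt (x r) (W.mem_Ioo hr.le)).comp r (W.hasDerivAt r hr)

lemma exists_linearizedSolution : ∃ φ ψ, LinearizedSolution k g' x φ ψ := by
  have hx : Continuous fun t : ℝ => x |t| :=
    W.continuousOn.comp_continuous continuous_abs abs_nonneg
  have hg' : Continuous fun t : ℝ => g' (x |t|) :=
    H.continuousOn_deriv.comp_continuous hx fun t => W.mem_Ioo (abs_nonneg t)
  obtain ⟨φ, ψ, s, hφ⟩ := exists_radialSolution k (N := fun t z => g' (x |t|) * z) (L := L) (C := 0)
    ((hg'.comp continuous_fst).mul continuous_snd)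
    (fun t => LipschitzWith.of_dist_le_mul fun z w => by
      rw [Real.dist_eq, Real.dist_eq, ← mul_sub, abs_mul]
      exact mul_le_mul_of_nonneg_right (H.abs_deriv_le (W.mem_Ioo (abs_nonneg t))) (abs_nonneg _))
    (fun t => by simp) 1
  exact ⟨φ, ψ, s.congr_source fun r hr => by rw [abs_of_pos hr], hφ⟩

variable (N : LinearizedSolution k g' x φ ψ)
include N

section Translation

lemma hasDerivAt_translationWronskian (hr : 0 < r) :
    HasDerivAt (translationWronskian k g x y φ ψ) (r ^ k * (k / r ^ 2 * (y r * φ r))) r := by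
  have hk : HasDerivAt (fun r : ℝ => (k : ℝ) / r) (-(k / r ^ 2)) r :=
    ((hasDerivAt_inv hr.ne').const_mul (k : ℝ)).congr_deriv (by field_simp)
  have hy := W.hasDerivAt_deriv r hr
  refine (N.hasDerivAt_radialWronskian hr hy
    ((hk.neg.mul hy).sub (W.hasDerivAt_source H hr))).congr_deriv ?_
  simp only [Pi.neg_apply, Pi.sub_apply, Pi.mul_apply]
  field_simp
  ring

lemma translationWronskian_le (hr : 0 < r) (hrs : r ≤ s) (hpos : ∀ t ∈ Ioo r s, 0 ≤ φ t) :
    translationWronskian k g x y φ ψ s ≤ translationWronskian k g x y φ ψ r :=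
  le_of_hasDerivAt_nonpos hrs (fun t ht => (W.hasDerivAt_translationWronskian H N
      (hr.trans_le ht.1)).continuousAt.continuousWithinAt)
    (fun t ht => W.hasDerivAt_translationWronskian H N (hr.trans ht.1)) fun t ht => by
      have ht0 : 0 < t := hr.trans ht.1
      have hyφ : y t * φ t ≤ 0 := mul_nonpos_of_nonpos_of_nonneg (W.deriv_neg t ht0).le (hpos t ht)
      exact mul_nonpos_of_nonneg_of_nonpos (by positivity)
        (mul_nonpos_of_nonneg_of_nonpos (by positivity) hyφ)

-- Since `y r / r → -g (x 0) / (k + 1)`, the bracket in the Wronskian tends to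
-- `-g (x 0) / (k + 1) < 0` at the origin.
lemma exists_translationWronskian_neg : ∃ r, 0 < r ∧ translationWronskian k g x y φ ψ r < 0 := by
  have hright : 𝓝[>] (0 : ℝ) ≤ 𝓝[≥] 0 := nhdsWithin_mono _ Ioi_subset_Ici_self
  have hlim {u : ℝ → ℝ} (hu : ContinuousOn u (Ici 0)) : Tendsto u (𝓝[>] 0) (𝓝 (u 0)) :=
    (hu 0 self_mem_Ici).mono_left hright
  have hg : ContinuousOn (fun r => g (x r)) (Ici 0) :=
    H.lipschitz.continuous.comp_continuousOn W.continuousOn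
  have hbracket := ((((W.tendsto_deriv_div (hg 0 self_mem_Ici)).const_mul (-(k : ℝ))).sub
    (hlim hg)).mul (hlim N.continuousOn)).sub ((hlim W.continuousOn_deriv).mul
      (hlim N.continuousOn_deriv))
  have hg0 : 0 < g (x 0) := H.pos _ ⟨W.lt_initial H.toBistableNonlinearity, W.initial_lt⟩
  have hneg : (-(k : ℝ) * (-g (x 0) / (k + 1)) - g (x 0)) * φ 0 - y 0 * ψ 0 < 0 := by
    rw [N.initial, W.deriv_zero]
    have : 0 < g (x 0) / (k + 1) := by positivity
    linarith [show -(k : ℝ) * (-g (x 0) / (k + 1)) - g (x 0) = -(g (x 0) / (k + 1)) by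
      field_simp; ring]
  obtain ⟨r, hr, hr0⟩ := ((hbracket.eventually (gt_mem_nhds hneg)).and self_mem_nhdsWithin).exists
  refine ⟨r, hr0, mul_neg_of_pos_of_neg (pow_pos hr0 k) ?_⟩
  rwa [show -(k : ℝ) * (y r / r) = -(k / r) * y r by ring] at hr

-- The quotient `y / φ` is decreasing, as its derivative has the sign of the Wronskian.
lemma mul_le_neg_deriv (hr : 0 < r) (hrs : r ≤ s) (hW : translationWronskian k g x y φ ψ r < 0)
    (hpos : ∀ t ∈ Icc r s, 0 < φ t) : -(y r / φ r) * φ s ≤ -y s := by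
  have hderiv (t : ℝ) (ht : t ∈ Icc r s) : HasDerivAt (fun t => y t / φ t)
      (((-(k / t) * y t - g (x t)) * φ t - y t * ψ t) / φ t ^ 2) t :=
    (W.hasDerivAt_deriv t (hr.trans_le ht.1)).div (N.hasDerivAt t (hr.trans_le ht.1))
      (hpos t ht).ne'
  have hle : y s / φ s ≤ y r / φ r :=
    le_of_hasDerivAt_nonpos hrs (fun t ht => (hderiv t ht).continuousAt.continuousWithinAt)
      (fun t ht => hderiv t (Ioo_subset_Icc_self ht)) fun t ht => by
        have hWt := (W.translationWronskian_le H N hr ht.1.le fun u hu =>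
          (hpos u ⟨hu.1.le, hu.2.le.trans ht.2.le⟩).le).trans_lt hW
        exact div_nonpos_of_nonpos_of_nonneg
          (neg_of_mul_neg_right hWt (pow_nonneg (hr.trans ht.1).le k)).le (sq_nonneg _)
  rw [div_le_iff₀ (hpos s (right_mem_Icc.2 hrs))] at hle
  linarith

lemma exists_linearizedSolution_nonpos : ∃ r, 0 < r ∧ φ r ≤ 0 := by
  by_contra! hpos
  obtain ⟨ε, hε, hW⟩ := W.exists_translationWronskian_neg H N
  have hκ : 0 < -(y ε / φ ε) := neg_pos.2 (div_neg_of_neg_of_pos (W.deriv_neg ε hε) (hpos ε hε))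
  have hφ : ∀ᶠ r in atTop, φ r ≤ 1 / -(y ε / φ ε) := by
    filter_upwards [eventually_ge_atTop ε,
      W.tendsto_deriv.eventually (lt_mem_nhds (show (-1 : ℝ) < 0 by norm_num))] with r hr hyr
    rw [le_div_iff₀' hκ]
    linarith [W.mul_le_neg_deriv H N hε hr hW fun t ht => hpos t (hε.trans_le ht.1)]
  have hζ : Tendsto (fun r : ℝ => r ^ k * (-(k / r) * y r - g (x r))) atTop (𝓝 0) := by
    have hk : Tendsto (fun r : ℝ => (k : ℝ) / r) atTop (𝓝 0) :=
      tendsto_const_nhds.div_atTop tendsto_id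
    have hlim := (hk.neg.mul (W.tendsto_pow_mul_deriv H k)).sub (W.tendsto_pow_mul_source H k)
    rw [mul_zero, sub_zero] at hlim
    exact hlim.congr fun r => by ring
  obtain ⟨r, hr, hφr⟩ := exists_nonpos_of_radialWronskian_le (neg_pos.2 hW)
    (W.tendsto_pow_mul_deriv H k) hζ W.deriv_neg N.hasDerivAt hφ <| by
      filter_upwards [eventually_ge_atTop ε] with r hr
      rw [neg_neg]
      exact W.translationWronskian_le H N hε hr fun t ht => (hpos t (hε.trans ht.1)).le
  exact (hpos r hr).not_ge hφr

end Translation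

lemma exists_isFirstZero : ∃ r, IsFirstZero φ r := by
  obtain ⟨R, hR, hφR⟩ := W.exists_linearizedSolution_nonpos H N
  obtain ⟨r, hr, hφr, hneg⟩ := exists_first_zero (φ := fun t => -φ t) hR.le
    (N.continuousOn_Icc le_rfl).neg (by rw [N.initial]; norm_num) (neg_nonneg.2 hφR)
  exact ⟨r, hr.1, neg_eq_zero.1 hφr, fun t ht => neg_neg_iff_pos.1 (hneg t ht)⟩

lemma deriv_neg_of_isFirstZero (Z : IsFirstZero φ r) : ψ r < 0 := by
  have hle : 0 ≤ -ψ r := deriv_nonneg_of_neg_left (N.hasDerivAt r Z.pos).neg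
    (by simp [Z.eq_zero]) Z.pos fun t ht => neg_neg_iff_pos.2 (Z.forall_pos t ⟨ht.1.le, ht.2⟩)
  refine (neg_nonneg.1 hle).lt_of_ne fun hψ => ?_
  have h0 := N.eq_zero_of_right_eq_zero L.coe_nonneg Z.pos (fun t ht => by
    rw [abs_mul]
    exact mul_le_mul_of_nonneg_right (H.abs_deriv_le (W.mem_Ioo ht.1.le)) (abs_nonneg _))
    Z.eq_zero hψ
  exact one_ne_zero (N.initial.symm.trans h0)

section Dilation

lemma hasDerivAt_dilationWronskian (hr : 0 < r) :
    HasDerivAt (dilationWronskian k g l x y φ ψ)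
      (r ^ k * (φ r * linearizedSource g g' l (x r))) r := by
  refine (N.hasDerivAt_radialWronskian hr (W.hasDerivAt_dilationMode hr)
    (((W.hasDerivAt_deriv r hr).const_mul (1 + l - k)).sub
      ((hasDerivAt_id r).mul (W.hasDerivAt_source H hr)))).congr_deriv ?_
  simp only [id, dilationMode, linearizedSource, Pi.sub_apply, Pi.mul_apply]
  field_simp
  ring

lemma continuousOn_dilationWronskian :
    ContinuousOn (dilationWronskian k g l x y φ ψ) (Ici 0) := by
  have hg := H.lipschitz.continuous.comp_continuousOn W.continuousOn
  have hy := W.continuousOn_deriv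
  exact (continuous_pow k).continuousOn.mul (((((continuousOn_const.mul hy).sub
    (continuousOn_id.mul hg))).mul N.continuousOn).sub
      (((continuousOn_id.mul hy).add (continuousOn_const.mul W.continuousOn)).mul
        N.continuousOn_deriv))

-- Otherwise the source is negative on `[0, r)`, so the Wronskian, which vanishes at `0` and at
-- `r`, is strictly decreasing on `[0, r]`.
lemma linearizedSource_pos (Z : IsFirstZero φ r) (hrs : r ≤ s) :
    0 < linearizedSource g g' (logSlope x y r) (x s) := by
  have hl := W.logSlope_pos Z.pos
  have hr : 0 < linearizedSource g g' (logSlope x y r) (x r) := by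
    by_contra! hle
    have hlt := lt_of_hasDerivAt_neg Z.pos
      ((W.continuousOn_dilationWronskian H N (l := logSlope x y r)).mono fun t ht => ht.1)
      (fun t ht => W.hasDerivAt_dilationWronskian H N ht.1) fun t ht =>
        mul_neg_of_pos_of_neg (pow_pos ht.1 k) <|
          mul_neg_of_pos_of_neg (Z.forall_pos t ⟨ht.1.le, ht.2⟩) <|
            H.linearizedSource_crossing _ (x r) (x t) hl (W.pos r Z.pos.le)
              (W.lt_of_lt ht.1.le ht.2) (W.mem_Ioo ht.1.le).2 hle
    rw [dilationWronskian, radialWronskian, radialWronskian, W.dilationMode_logSlope Z.pos.le,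
      Z.eq_zero, N.deriv_zero, W.deriv_zero] at hlt
    simp at hlt
  rcases hrs.eq_or_lt with rfl | hrs
  · exact hr
  · by_contra! hle
    exact (H.linearizedSource_crossing _ (x s) (x r) hl (W.pos s (Z.pos.trans hrs).le)
      (W.lt_of_lt Z.pos.le hrs) (W.mem_Ioo Z.pos.le).2 hle).not_gt hr

lemma dilationWronskian_lt (Z : IsFirstZero φ r) (hrs : r ≤ s) (hst : s < t)
    (hneg : ∀ u ∈ Ioo s t, φ u < 0) :
    dilationWronskian k g (logSlope x y r) x y φ ψ t <
      dilationWronskian k g (logSlope x y r) x y φ ψ s := by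
  have hs : 0 < s := Z.pos.trans_le hrs
  exact lt_of_hasDerivAt_neg hst
    ((W.continuousOn_dilationWronskian H N).mono fun u hu => hs.le.trans hu.1)
    (fun u hu => W.hasDerivAt_dilationWronskian H N (hs.trans hu.1)) fun u hu =>
      mul_neg_of_pos_of_neg (pow_pos (hs.trans hu.1) k)
        (mul_neg_of_neg_of_pos (hneg u hu) (W.linearizedSource_pos H N Z (hrs.trans hu.1.le)))

-- At a second zero the Wronskian would be both negative, by monotonicity, and nonnegative.
lemma neg_of_isFirstZero_lt (Z : IsFirstZero φ r) (hrt : r < t) : φ t < 0 := by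
  by_contra! ht
  obtain ⟨z, hz, hφz, hneg⟩ := exists_next_zero (N.hasDerivAt r Z.pos) Z.eq_zero
    (W.deriv_neg_of_isFirstZero H N Z) hrt (N.continuousOn_Icc Z.pos.le) ht
  have hz0 : 0 < z := Z.pos.trans hz.1
  have hψz : 0 ≤ ψ z := deriv_nonneg_of_neg_left (N.hasDerivAt z hz0) hφz hz.1 hneg
  have hlt := W.dilationWronskian_lt H N Z le_rfl hz.1 hneg
  rw [W.dilationWronskian_eq_zero Z, dilationWronskian, radialWronskian, hφz] at hlt
  have hmode := W.dilationMode_logSlope_neg H Z.pos hz.1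
  have := mul_nonneg (pow_nonneg hz0.le k) (mul_nonneg (neg_nonneg.2 hmode.le) hψz)
  linarith

omit N in
lemma tendsto_dilationWronskian {A B : ℝ} (hφ : ∀ᶠ r in atTop, |φ r| ≤ A)
    (hψ : ∀ᶠ r in atTop, |r ^ k * ψ r| ≤ B) :
    Tendsto (dilationWronskian k g l x y φ ψ) atTop (𝓝 0) := by
  have hderiv := ((W.tendsto_pow_mul_deriv H k).const_mul (1 + l - k)).sub
    (W.tendsto_pow_mul_source H (k + 1))
  have hmode := (W.tendsto_pow_mul_deriv H 1).add (W.tendsto.const_mul l)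
  simp only [mul_zero, sub_zero, add_zero] at hderiv hmode
  have hlim := (hderiv.zero_mul_isBoundedUnder_le ⟨A, eventually_map.2 hφ⟩).sub
    (hmode.zero_mul_isBoundedUnder_le ⟨B, eventually_map.2 hψ⟩)
  rw [sub_zero] at hlim
  refine hlim.congr fun r => ?_
  simp only [dilationWronskian, radialWronskian, dilationMode]
  ring

-- Otherwise `φ` and `r ^ k ψ` are bounded, so that the Wronskian vanishes at infinity; but it
-- vanishes at the zero of `φ` and decreases strictly from there on.
lemma exists_linearizedSolution_deriv_neg {R : ℝ} (Z : IsFirstZero φ r) (hrR : r < R)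
    (hx : ∀ t, R ≤ t → x t < δ) : ∃ t, R ≤ t ∧ ψ t < 0 := by
  by_contra! hψ
  have hR : 0 < R := Z.pos.trans hrR
  have hφ (t : ℝ) (ht : r < t) : φ t < 0 := W.neg_of_isFirstZero_lt H N Z ht
  have hφbound : ∀ᶠ t in atTop, |φ t| ≤ -φ R := by
    filter_upwards [eventually_ge_atTop R] with t ht
    rw [abs_of_neg (hφ t (hrR.trans_le ht)), neg_le_neg_iff]
    exact le_of_hasDerivAt_nonneg ht (N.continuousOn_Icc hR.le)
      (fun s hs => N.hasDerivAt s (hR.trans hs.1)) fun s hs => hψ s hs.1.le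
  have hψbound : ∀ᶠ t in atTop, |t ^ k * ψ t| ≤ R ^ k * ψ R := by
    filter_upwards [eventually_ge_atTop R] with t ht
    rw [abs_of_nonneg (mul_nonneg (pow_nonneg (hR.le.trans ht) k) (hψ t ht))]
    refine le_of_hasDerivAt_nonpos ht (N.continuousOn_flux hR.le)
      (fun s hs => N.hasDerivAt_flux (hR.trans hs.1)) fun s hs => ?_
    have hs0 : 0 < s := hR.trans hs.1
    have hslope : g' (x s) ≤ 0 := (H.deriv_le _
      ⟨W.pos s hs0.le, (hx s hs.1.le).le⟩).trans (neg_nonpos.2 (sq_nonneg m))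
    exact neg_nonpos.2 (mul_nonneg (pow_nonneg hs0.le k)
      (mul_nonneg_of_nonpos_of_nonpos hslope (hφ s (hrR.trans hs.1)).le))
  have hWR : 0 ≤ dilationWronskian k g (logSlope x y r) x y φ ψ R := by
    refine le_of_tendsto (W.tendsto_dilationWronskian H hφbound hψbound (l := logSlope x y r)) ?_
    filter_upwards [eventually_gt_atTop R] with t ht
    exact (W.dilationWronskian_lt H N Z hrR.le ht fun u hu => hφ u (hrR.trans hu.1)).le
  have hlt := W.dilationWronskian_lt H N Z le_rfl hrR fun u hu => hφ u hu.1
  rw [W.dilationWronskian_eq_zero Z] at hlt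
  exact hWR.not_gt hlt

lemma exists_linearizedSolution_neg :
    ∃ R, 0 < R ∧ (∀ r, R ≤ r → x r < δ) ∧ φ R < 0 ∧ ψ R < 0 := by
  obtain ⟨r, Z⟩ := W.exists_isFirstZero H N
  obtain ⟨S, -, hS⟩ := W.exists_forall_lt H.δ_pos
  obtain ⟨R, hR⟩ := exists_gt (max S r)
  have hSR : S ≤ R := ((le_max_left S r).trans_lt hR).le
  have hrR : r < R := (le_max_right S r).trans_lt hR
  obtain ⟨t, ht, hψ⟩ := W.exists_linearizedSolution_deriv_neg H N Z hrR
    fun t ht => hS t (hSR.trans ht)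
  exact ⟨t, (Z.pos.trans hrR).trans_le ht, fun s hs => hS s (hSR.trans (ht.trans hs)),
    W.neg_of_isFirstZero_lt H N Z (hrR.trans_le ht), hψ⟩

end Dilation

end GroundState

/-! ### Uniqueness of the ground state -/

lemma exists_abs_sub_sub_mul_le {g g' : ℝ → ℝ} {K s : Set ℝ} (hs : IsOpen s) (hK : IsCompact K)
    (hKs : K ⊆ s) (hg : ∀ x ∈ s, HasDerivAt g (g' x) x) (hg' : ContinuousOn g' s) {η : ℝ}
    (hη : 0 < η) : ∃ ρ, 0 < ρ ∧ ∀ w ∈ K, ∀ z, |z - w| < ρ →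
      |g z - g w - g' w * (z - w)| ≤ η * |z - w| := by
  obtain ⟨d, hd, hds⟩ := hK.exists_cthickening_subset_open hs hKs
  obtain ⟨ρ, hρ, hclose⟩ := Metric.uniformContinuousOn_iff.1
    (hK.cthickening.uniformContinuousOn_of_continuous (hg'.mono hds)) η hη
  refine ⟨min ρ d, lt_min hρ hd, fun w hw z hz => ?_⟩
  have hdist : ∀ t ∈ uIcc w z, dist t w < min ρ d := fun t ht =>
    (abs_sub_left_of_mem_uIcc ht).trans_lt hz
  have hmem : ∀ t ∈ uIcc w z, t ∈ Metric.cthickening d K := fun t ht =>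
    Metric.closedBall_subset_cthickening hw d ((hdist t ht).le.trans (min_le_right ρ d))
  have hmean := (convex_uIcc w z).norm_image_sub_le_of_norm_hasDerivWithin_le
    (f := fun t => g t - g' w * t) (C := η)
    (fun t ht => ((hg t (hds (hmem t ht))).sub
      ((hasDerivAt_id t).const_mul (g' w))).hasDerivWithinAt)
    (fun t ht => by
      have := hclose t (hmem t ht) w (Metric.self_subset_cthickening K hw)
        ((hdist t ht).trans_le (min_le_left ρ d))
      rw [mul_one]
      exact this.le) left_mem_uIcc right_mem_uIcc
  simp only [Real.norm_eq_abs] at hmean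
  convert hmean using 2
  ring

lemma RadialSolution.le_of_source_nonneg {k : ℕ} {h x y : ℝ → ℝ} {r s : ℝ}
    (S : RadialSolution k h x y) (hr : 0 ≤ r) (hrs : r ≤ s) (hy : y r ≤ 0)
    (hh : ∀ t ∈ Ioo r s, 0 ≤ h t) : x s ≤ x r := by
  refine S.le_of_deriv_nonpos hr hrs fun t ht => ?_
  have hflux := le_of_hasDerivAt_nonpos ht.1.le (S.continuousOn_flux hr)
    (fun u hu => S.hasDerivAt_flux (hr.trans_lt hu.1)) fun u hu =>
      neg_nonpos.2 (mul_nonneg (pow_nonneg (hr.trans hu.1.le) k) (hh u ⟨hu.1, hu.2.trans ht.2⟩))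
  have hflux_r := mul_nonpos_of_nonneg_of_nonpos (pow_nonneg hr k) hy
  exact nonpos_of_mul_nonpos_right (hflux.trans hflux_r) (pow_pos (hr.trans_lt ht.1) k)

lemma NonlinearRadialSolution.sub_le_sub_of_antitoneOn {k : ℕ} {g x₁ y₁ x₂ y₂ : ℝ → ℝ} {δ r s : ℝ}
    (s₁ : NonlinearRadialSolution k g x₁ y₁) (s₂ : NonlinearRadialSolution k g x₂ y₂)
    (hg : AntitoneOn g (Icc 0 δ)) (hr : 0 ≤ r) (hrs : r ≤ s) (hx : x₁ r < x₂ r)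
    (hy : y₁ r ≤ y₂ r) (hx₁ : ∀ t ∈ Ioo r s, 0 ≤ x₁ t) (hx₂ : ∀ t ∈ Ioo r s, x₂ t ≤ δ) :
    x₂ r - x₁ r ≤ x₂ s - x₁ s := by
  have hstep : ∀ u ∈ Icc r s, (∀ t ∈ Ioo r u, x₁ t ≤ x₂ t) → x₁ u - x₂ u ≤ x₁ r - x₂ r :=
    fun u hu hle => (s₁.sub s₂).le_of_source_nonneg hr hu.1 (sub_nonpos.2 hy) fun t ht => by
      have hts : t ∈ Ioo r s := ⟨ht.1, ht.2.trans_le hu.2⟩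
      have hxt := hle t ht
      exact sub_nonneg.2 (hg ⟨hx₁ t hts, hxt.trans (hx₂ t hts)⟩
        ⟨(hx₁ t hts).trans hxt, hx₂ t hts⟩ hxt)
  have hle : ∀ t ∈ Ioo r s, x₁ t ≤ x₂ t := fun t ht => by
    by_contra! hlt
    obtain ⟨u, hu, hu0, hneg⟩ := exists_first_zero ht.1.le ((s₁.sub s₂).continuousOn_Icc hr)
      (sub_neg.2 hx) (sub_pos.2 hlt).le
    have := hstep u ⟨hu.1.le, hu.2.trans ht.2.le⟩ fun v hv =>
      (sub_neg.1 (hneg v ⟨hv.1.le, hv.2⟩)).le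
    linarith
  linarith [hstep s ⟨hrs, le_rfl⟩ hle]

namespace ShootingFamily

variable {k : ℕ} {g g' G φ ψ : ℝ → ℝ} {L : ℝ≥0} {b c δ m α α₁ α₂ R : ℝ} {U V : ℝ → ℝ → ℝ}
  (Φ : ShootingFamily k g U V) (H : CrossingNonlinearity g g' G L b c δ m)
include Φ H

lemma eventually_abs_source_sub_le (W : GroundState k g c (U α) (V α)) {η : ℝ} (hη : 0 < η) :
    ∀ᶠ β in 𝓝 α, ∀ r ∈ Icc 0 R, |g (U β r) - g (U α r) - (β - α) * (g' (U α r) * φ r)| ≤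
      L * |U β r - U α r - (β - α) * φ r| + η * |β - α| := by
  set E := Real.exp ((L + 2) * R)
  have hE : 0 < E := Real.exp_pos _
  obtain ⟨ρ, hρ, htaylor⟩ := exists_abs_sub_sub_mul_le isOpen_Ioo
    (isCompact_Icc.image_of_continuousOn (W.continuousOn_Icc (b := R) le_rfl))
    (image_subset_iff.2 fun r hr => W.mem_Ioo hr.1) H.hasDerivAt H.continuousOn_deriv
    (div_pos hη hE)
  have hlim : Tendsto (fun β => E * |β - α|) (𝓝 α) (𝓝 0) := by
    have : Continuous (fun β => E * |β - α|) := by fun_prop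
    simpa using this.tendsto α
  filter_upwards [hlim.eventually (gt_mem_nhds hρ)] with β hβ r hr
  have hclose : |U β r - U α r| ≤ E * |β - α| := by
    simpa only [Φ.initial] using
      (NonlinearRadialSolution.abs_sub_le_and_abs_deriv_sub_le H.lipschitz
        (Φ.solution β) (Φ.solution α) hr).1
  have hslope := mul_le_mul_of_nonneg_right (H.abs_deriv_le (W.mem_Ioo hr.1))
    (abs_nonneg (U β r - U α r - (β - α) * φ r))
  calc |g (U β r) - g (U α r) - (β - α) * (g' (U α r) * φ r)|
      = |g' (U α r) * (U β r - U α r - (β - α) * φ r)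
          + (g (U β r) - g (U α r) - g' (U α r) * (U β r - U α r))| := by congr 1; ring
    _ ≤ |g' (U α r)| * |U β r - U α r - (β - α) * φ r| + η / E * |U β r - U α r| :=
      (abs_add_le _ _).trans (add_le_add (abs_mul _ _).le
        (htaylor _ (mem_image_of_mem _ hr) _ (hclose.trans_lt hβ)))
    _ ≤ L * |U β r - U α r - (β - α) * φ r| + η / E * (E * |β - α|) := by gcongr
    _ = L * |U β r - U α r - (β - α) * φ r| + η * |β - α| := by field_simp

lemma hasDerivAt_initial (W : GroundState k g c (U α) (V α))
    (N : LinearizedSolution k g' (U α) φ ψ) (hR : 0 ≤ R) :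
    HasDerivAt (fun β => U β R) (φ R) α ∧ HasDerivAt (fun β => V β R) (ψ R) α := by
  have hbound : ∀ ε : ℝ, 0 < ε → ∀ᶠ β in 𝓝 α,
      |U β R - U α R - (β - α) * φ R| ≤ ε * |β - α| ∧
        |V β R - V α R - (β - α) * ψ R| ≤ ε * |β - α| := fun ε hε => by
    set E := Real.exp ((L + 2) * R)
    have hE : 0 < √E := Real.sqrt_pos.2 (Real.exp_pos _)
    filter_upwards [Φ.eventually_abs_source_sub_le H W (φ := φ) (div_pos hε hE)] with β hβ
    have hstable := (((Φ.solution β).sub (Φ.solution α)).sub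
      (N.toRadialSolution.const_mul (β - α))).sq_add_sq_le L.coe_nonneg hR hβ
    have hsq : E * (0 ^ 2 + (ε / √E * |β - α|) ^ 2) = (ε * |β - α|) ^ 2 := by
      rw [mul_pow, div_pow, Real.sq_sqrt (Real.exp_pos _).le]
      field_simp
      ring
    simp only [Φ.initial, N.initial, mul_one, sub_self] at hstable
    rw [hsq] at hstable
    have hnonneg : 0 ≤ ε * |β - α| := by positivity
    exact ⟨abs_le_of_sq_le_sq (le_of_add_le_of_nonneg_left hstable (sq_nonneg _)) hnonneg,
      abs_le_of_sq_le_sq (le_of_add_le_of_nonneg_right hstable (sq_nonneg _)) hnonneg⟩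
  simp only [hasDerivAt_iff_isLittleO, Asymptotics.isLittleO_iff, Real.norm_eq_abs, smul_eq_mul]
  exact ⟨fun ε hε => (hbound ε hε).mono fun _ h => h.1,
    fun ε hε => (hbound ε hε).mono fun _ h => h.2⟩

/-- The linearized solution is negative with negative derivative at some point beyond which `g` is
decreasing along both solutions, so larger initial values fall further and further behind. -/
lemma eventually_mem_crossingSet_right (W : GroundState k g c (U α) (V α)) :
    ∀ᶠ β in 𝓝[>] α, β ∈ crossingSet U := by
  obtain ⟨φ, ψ, N⟩ := W.exists_linearizedSolution H
  obtain ⟨R, hR, hδ, hφ, hψ⟩ := W.exists_linearizedSolution_neg H N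
  obtain ⟨hU, hV⟩ := Φ.hasDerivAt_initial H W N hR.le
  filter_upwards [eventually_neg_right_of_hasDerivAt_neg (hU.sub_const (U α R)) (sub_self _) hφ,
    eventually_neg_right_of_hasDerivAt_neg (hV.sub_const (V α R)) (sub_self _) hψ] with β hβU hβV
  by_contra! hβ
  have hnonneg : ∀ r, 0 ≤ r → 0 ≤ U β r := fun r hr => by
    by_contra! hneg
    exact hβ ⟨r, hr, hneg⟩
  obtain ⟨r, hr, hRr⟩ := ((W.tendsto.eventually (gt_mem_nhds (neg_pos.2 hβU))).and
    (eventually_ge_atTop R)).exists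
  have hgap := (Φ.solution β).sub_le_sub_of_antitoneOn (Φ.solution α) H.antitoneOn hR.le hRr
    (sub_neg.1 hβU) (sub_neg.1 hβV).le (fun t ht => hnonneg t (hR.trans ht.1).le)
    fun t ht => (hδ t ht.1.le).le
  linarith [hnonneg r (hR.le.trans hRr)]

lemma eventually_notMem_crossingSet_left_of_groundState (W : GroundState k g c (U α) (V α)) :
    ∀ᶠ β in 𝓝[<] α, β ∉ crossingSet U := by
  obtain ⟨φ, ψ, N⟩ := W.exists_linearizedSolution H
  obtain ⟨R, hR, hδ, hφ, hψ⟩ := W.exists_linearizedSolution_neg H N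
  obtain ⟨hU, hV⟩ := Φ.hasDerivAt_initial H W N hR.le
  have hlipschitz := H.lipschitz
  filter_upwards [eventually_pos_left_of_hasDerivAt_neg (hU.sub_const (U α R)) (sub_self _) hφ,
    eventually_pos_left_of_hasDerivAt_neg (hV.sub_const (V α R)) (sub_self _) hψ,
    (Φ.eventually_forall_gt hlipschitz hR.le fun s hs => W.pos s hs.1).filter_mono
      nhdsWithin_le_nhds,
    ((Φ.tendsto_solution hlipschitz hR.le).eventually (gt_mem_nhds (hδ R le_rfl))).filter_mono
      nhdsWithin_le_nhds, self_mem_nhdsWithin] with β hβU hβV hpos hβδ hβα hcross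
  have hα : α < c := Φ.initial α ▸ W.initial_lt
  obtain ⟨r, hr, hUr, hbefore⟩ := Φ.exists_zero_of_mem_crossingSet H.toBistableNonlinearity
    (Φ.initial β ▸ hpos 0 ⟨le_rfl, hR.le⟩) (hβα.trans hα) hcross
  have hRr : R < r := by
    by_contra! hrR
    exact (hpos r ⟨hr.le, hrR⟩).ne' hUr
  have hβle : ∀ t ∈ Ioo R r, U β t ≤ δ := fun t ht =>
    ((Φ.solution β).le_of_deriv_nonpos hR.le ht.1.le fun u hu =>
      (hbefore u ⟨(hR.trans hu.1).le, hu.2.trans ht.2⟩).2).trans hβδ.le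
  have hgap := (Φ.solution α).sub_le_sub_of_antitoneOn (Φ.solution β) H.antitoneOn hR.le hRr.le
    (sub_pos.1 hβU) (sub_pos.1 hβV).le (fun t ht => (W.pos t (hR.trans ht.1).le).le) hβle
  linarith [W.pos r hr.le]

lemma eventually_notMem_crossingSet_left (h0 : 0 < α) (hc : α < c) (hα : α ∉ crossingSet U) :
    ∀ᶠ β in 𝓝[<] α, β ∉ crossingSet U := by
  have B := H.toBistableNonlinearity
  by_cases htrap : α ∈ trappingSet G U V
  · filter_upwards [nhdsWithin_le_nhds
      ((Φ.isOpen_trappingSet B.lipschitz B.continuous_primitive).mem_nhds htrap)] with β hβ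
    exact disjoint_right.1 (Φ.disjoint_crossingSet_trappingSet B) hβ
  · exact Φ.eventually_notMem_crossingSet_left_of_groundState H
      (Φ.groundState_of_notMem B h0 hc hα htrap)

lemma groundState_initial_le (W₁ : GroundState k g c (U α₁) (V α₁))
    (W₂ : GroundState k g c (U α₂) (V α₂)) : α₂ ≤ α₁ := by
  by_contra! hlt
  obtain ⟨β, hβ, hαβ⟩ :=
    ((Φ.eventually_mem_crossingSet_right H W₁).and (Ioo_mem_nhdsGT hlt)).exists
  have hα₂ : α₂ ∉ crossingSet U := fun ⟨r, hr, hneg⟩ => (W₂.pos r hr).not_gt hneg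
  obtain ⟨γ, hγ, hleast⟩ := (isCompact_Icc.inter_right
    (Φ.isOpen_crossingSet H.lipschitz).isClosed_compl).exists_isLeast
      ⟨α₂, ⟨hαβ.2.le, le_rfl⟩, hα₂⟩
  have hβγ : β < γ := hγ.1.1.lt_of_ne (by rintro rfl; exact hγ.2 hβ)
  have h0 : 0 < α₁ := Φ.initial α₁ ▸ W₁.pos 0 le_rfl
  have hc : α₂ < c := Φ.initial α₂ ▸ W₂.initial_lt
  obtain ⟨t, ht, hmem⟩ := ((Φ.eventually_notMem_crossingSet_left H
    (h0.trans (hαβ.1.trans hβγ)) (hγ.1.2.trans_lt hc) hγ.2).and (Ioo_mem_nhdsLT hβγ)).exists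
  exact (hleast ⟨⟨hmem.1.le, hmem.2.le.trans hγ.1.2⟩, ht⟩).not_gt hmem.2

lemma groundState_unique (W₁ : GroundState k g c (U α₁) (V α₁))
    (W₂ : GroundState k g c (U α₂) (V α₂)) : α₁ = α₂ :=
  le_antisymm (Φ.groundState_initial_le H W₂ W₁) (Φ.groundState_initial_le H W₁ W₂)

end ShootingFamily

/-! ### Radial solutions and positive solutions of the boundary value problem -/

lemma iteratedDerivWithin_two (u : ℝ → ℝ) (s : Set ℝ) :
    iteratedDerivWithin 2 u s = derivWithin (derivWithin u s) s := by
  rw [iteratedDerivWithin_succ', iteratedDerivWithin_one]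

lemma contDiffOn_two_iff_derivWithin {u : ℝ → ℝ} {s : Set ℝ} (hs : UniqueDiffOn ℝ s) :
    ContDiffOn ℝ 2 u s ↔ DifferentiableOn ℝ u s ∧ DifferentiableOn ℝ (derivWithin u s) s ∧
      ContinuousOn (derivWithin (derivWithin u s) s) s := by
  rw [← one_add_one_eq_two, contDiffOn_succ_iff_derivWithin hs, contDiffOn_one_iff_derivWithin hs]
  simp

lemma hasDerivWithinAt_Ici_of_tendsto {u u' : ℝ → ℝ} {a d : ℝ} (hu : ContinuousOn u (Ici a))
    (hd : ∀ r, a < r → HasDerivAt u (u' r) r) (hl : Tendsto u' (𝓝[>] a) (𝓝 d)) :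
    HasDerivWithinAt u d (Ici a) a := by
  refine hasDerivWithinAt_Ici_of_tendsto_deriv (s := Ioi a)
    (fun r hr => (hd r hr).differentiableAt.differentiableWithinAt)
    ((hu a self_mem_Ici).mono Ioi_subset_Ici_self) self_mem_nhdsWithin (hl.congr' ?_)
  filter_upwards [self_mem_nhdsWithin] with r hr using (hd r hr).deriv.symm

namespace RadialSolution

variable {k : ℕ} {h x y : ℝ → ℝ} {r s : ℝ} (S : RadialSolution k h x y)
include S

lemma lt_of_source_neg (hr : 0 ≤ r) (hrs : r < s) (hy : y r = 0) (hh : ∀ t ∈ Ioo r s, h t < 0) :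
    x r < x s := by
  refine lt_of_hasDerivAt_pos hrs (S.continuousOn_Icc hr)
    (fun t ht => S.hasDerivAt t (hr.trans_lt ht.1)) fun t ht => ?_
  have hflux := lt_of_hasDerivAt_pos (φ := fun t => t ^ k * y t) ht.1 (S.continuousOn_flux hr)
    (fun u hu => S.hasDerivAt_flux (hr.trans_lt hu.1)) fun u hu =>
      neg_pos.2 (mul_neg_of_pos_of_neg (pow_pos (hr.trans_lt hu.1) k)
        (hh u ⟨hu.1, hu.2.trans ht.2⟩))
  rw [hy, mul_zero] at hflux
  exact pos_of_mul_pos_right hflux (pow_pos (hr.trans_lt ht.1) k).le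

lemma deriv_eq_zero_of_isMaxOn (hr : 0 ≤ r) (hmax : IsMaxOn x (Ici 0) r) : y r = 0 := by
  rcases hr.eq_or_lt with rfl | hr0
  · exact S.deriv_zero
  · exact (hmax.isLocalMax (Ici_mem_nhds hr0)).hasDerivAt_eq_zero (S.hasDerivAt r hr0)

lemma hasDerivWithinAt (hr : 0 ≤ r) : HasDerivWithinAt x (y r) (Ici 0) r := by
  rcases hr.eq_or_lt with rfl | hr0
  · exact hasDerivWithinAt_Ici_of_tendsto S.continuousOn S.hasDerivAt
      ((S.continuousOn_deriv 0 self_mem_Ici).mono_left (nhdsWithin_mono _ Ioi_subset_Ici_self))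
  · exact (S.hasDerivAt r hr0).hasDerivWithinAt

lemma tendsto_second_deriv (hh : ContinuousWithinAt h (Ici 0) 0) :
    Tendsto (fun r => -(k / r) * y r - h r) (𝓝[>] 0) (𝓝 (-h 0 / (k + 1))) := by
  have hlim := ((S.tendsto_deriv_div hh).const_mul (-(k : ℝ))).sub
    (hh.mono_left (nhdsWithin_mono _ Ioi_subset_Ici_self))
  refine (hlim.congr fun r => by ring).trans_eq ?_
  congr 1
  field_simp
  ring

lemma contDiffOn (hh : ContinuousOn h (Ici 0)) : ContDiffOn ℝ 2 x (Ici 0) := by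
  have hu : UniqueDiffOn ℝ (Ici (0 : ℝ)) := uniqueDiffOn_Ici 0
  have hy0 : HasDerivWithinAt y (-h 0 / (k + 1)) (Ici 0) 0 :=
    hasDerivWithinAt_Ici_of_tendsto S.continuousOn_deriv S.hasDerivAt_deriv
      (S.tendsto_second_deriv (hh 0 self_mem_Ici))
  have hy : ∀ r, 0 < r → HasDerivWithinAt y (-(k / r) * y r - h r) (Ici 0) r := fun r hr =>
    (S.hasDerivAt_deriv r hr).hasDerivWithinAt
  have hx : EqOn (derivWithin x (Ici 0)) y (Ici 0) := fun r hr =>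
    (S.hasDerivWithinAt hr).derivWithin (hu r hr)
  have hy' : EqOn (derivWithin y (Ici 0)) (fun r => -(k / r) * y r - h r) (Ioi 0) := fun r hr =>
    (hy r hr).derivWithin (hu r (mem_Ioi.1 hr).le)
  refine (contDiffOn_two_iff_derivWithin hu).2
    ⟨fun r hr => (S.hasDerivWithinAt hr).differentiableWithinAt,
      DifferentiableOn.congr (fun r hr => ?_) hx,
      ContinuousOn.congr (fun r hr => ?_) fun r hr => derivWithin_congr hx (hx hr)⟩ <;>
    rcases (mem_Ici.1 hr).eq_or_lt with rfl | hr0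
  · exact hy0.differentiableWithinAt
  · exact (hy r hr0).differentiableWithinAt
  · rw [← continuousWithinAt_Ioi_iff_Ici, ContinuousWithinAt, hy0.derivWithin (hu 0 hr)]
    exact (S.tendsto_second_deriv (hh 0 hr)).congr' hy'.symm.eventuallyEq_nhdsWithin
  · have hcont : ContinuousAt (fun r => -(k / r) * y r - h r) r :=
      ((continuousAt_const.div continuousAt_id hr0.ne').neg.mul
        (S.hasDerivAt_deriv r hr0).continuousAt).sub (hh.continuousAt (Ici_mem_nhds hr0))
    exact (hcont.congr (hy'.symm.eventuallyEq_of_mem (Ioi_mem_nhds hr0))).continuousWithinAt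

end RadialSolution

namespace RadialSolution

variable {k : ℕ} {φ x y : ℝ → ℝ} (S : RadialSolution k (fun r => φ (x r)) x y)
include S

lemma isPositiveSolution (hφ : ContinuousOn (fun r => φ (x r)) (Ici 0))
    (hpos : ∀ r, 0 ≤ r → 0 < x r) (hlim : Tendsto x atTop (𝓝 0)) :
    IsPositiveSolution (k + 1) φ x := by
  have hu : UniqueDiffOn ℝ (Ici (0 : ℝ)) := uniqueDiffOn_Ici 0
  have hx : EqOn (derivWithin x (Ici 0)) y (Ici 0) := fun r hr =>
    (S.hasDerivWithinAt hr).derivWithin (hu r hr)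
  refine ⟨S.contDiffOn hφ, hpos, fun r hr => ?_, (hx self_mem_Ici).trans S.deriv_zero, hlim⟩
  rw [iteratedDerivWithin_two, derivWithin_congr hx (hx hr.le), hx hr.le,
    (S.hasDerivAt_deriv r hr).hasDerivWithinAt.derivWithin (hu r hr.le)]
  push_cast
  ring

/-- At a maximum above the level `c` the derivative vanishes, but a negative source forces the
solution to increase afterwards. -/
lemma le_of_source_neg {c r : ℝ} (hlim : Tendsto x atTop (𝓝 0)) (hc : 0 < c)
    (hφ : ∀ z, c < z → φ z < 0) (hr : 0 ≤ r) : x r ≤ c := by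
  by_contra! hcr
  have hcocompact : ∀ᶠ t in cocompact ℝ ⊓ 𝓟 (Ici 0), x t ≤ x r := by
    rw [cocompact_eq_atBot_atTop, eventually_inf_principal, eventually_sup]
    exact ⟨(eventually_lt_atBot 0).mono fun t ht h0 => absurd h0 (not_le.2 ht),
      (hlim.eventually (gt_mem_nhds (hc.trans hcr))).mono fun t ht _ => ht.le⟩
  obtain ⟨s, hs, hmax⟩ := S.continuousOn.exists_isMaxOn' isClosed_Ici hr hcocompact
  have hnear : ∀ᶠ t in 𝓝[≥] s, c < x t :=
    ((S.continuousOn s hs).mono (Ici_subset_Ici.2 hs)).eventually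
      (lt_mem_nhds (hcr.trans_le (hmax hr)))
  obtain ⟨t, ht, hsub⟩ := mem_nhdsGE_iff_exists_Ico_subset.1 hnear
  have hlt := S.lt_of_source_neg hs ht (S.deriv_eq_zero_of_isMaxOn hs hmax) fun u hu =>
    hφ _ (hsub ⟨hu.1.le, hu.2⟩)
  exact hlt.not_ge (hmax (mem_Ici.2 (hs.trans ht.le)))

end RadialSolution

namespace IsPositiveSolution

variable {k : ℕ} {φ v : ℝ → ℝ}

lemma radialSolution (h : IsPositiveSolution (k + 1) φ v) :
    RadialSolution k (fun r => φ (v r)) v (derivWithin v (Ici 0)) := by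
  obtain ⟨hsmooth, -, heq, hzero, -⟩ := h
  obtain ⟨hv, hv', -⟩ := (contDiffOn_two_iff_derivWithin (uniqueDiffOn_Ici 0)).1 hsmooth
  refine ⟨hv.continuousOn, hv'.continuousOn, hzero,
    fun r hr => (hv r hr.le).hasDerivWithinAt.hasDerivAt (Ici_mem_nhds hr), fun r hr => ?_⟩
  have hode := heq r hr
  rw [iteratedDerivWithin_two, Nat.cast_add_one, add_sub_cancel_right] at hode
  exact ((hv' r hr.le).hasDerivWithinAt.hasDerivAt (Ici_mem_nhds hr)).congr_deriv (by linarith)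

variable {g G : ℝ → ℝ} {L : ℝ≥0} {b c : ℝ} {U V : ℝ → ℝ → ℝ}

lemma nonlinearRadialSolution (h : IsPositiveSolution (k + 1) φ v) (hc : 0 < c)
    (hφg : EqOn φ g (Icc 0 c)) (hφ : ∀ z, c < z → φ z < 0) :
    NonlinearRadialSolution k g v (derivWithin v (Ici 0)) :=
  h.radialSolution.congr_source fun r hr =>
    hφg ⟨(h.2.1 r hr.le).le, h.radialSolution.le_of_source_neg h.2.2.2.2 hc hφ hr.le⟩

lemma initial_lt (h : IsPositiveSolution (k + 1) φ v) (Φ : ShootingFamily k g U V)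
    (H : BistableNonlinearity g G L b c) (hφg : EqOn φ g (Icc 0 c)) (hφ : ∀ z, c < z → φ z < 0) :
    v 0 < c := by
  have hlim := h.2.2.2.2
  refine (h.radialSolution.le_of_source_neg hlim H.c_pos hφ le_rfl).lt_of_ne fun h0 => ?_
  have hconst : ∀ r, 0 ≤ r → v r = c := fun r hr =>
    ((h.nonlinearRadialSolution H.c_pos hφg hφ).eq_of_initial_eq H.lipschitz (Φ.solution c)
      (h0.trans (Φ.initial c).symm) hr).trans (Φ.eq_right H hr)
  have hlim' : Tendsto v atTop (𝓝 c) :=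
    tendsto_const_nhds.congr' ((eventually_ge_atTop 0).mono fun r hr => (hconst r hr).symm)
  exact H.c_pos.ne (tendsto_nhds_unique hlim hlim')

lemma eqOn_shooting (h : IsPositiveSolution (k + 1) φ v) (Φ : ShootingFamily k g U V)
    (H : BistableNonlinearity g G L b c) (hφg : EqOn φ g (Icc 0 c)) (hφ : ∀ z, c < z → φ z < 0) :
    EqOn v (U (v 0)) (Ici 0) := fun _ hr =>
  (h.nonlinearRadialSolution H.c_pos hφg hφ).eq_of_initial_eq H.lipschitz (Φ.solution _)
    (Φ.initial _).symm hr

lemma groundState (h : IsPositiveSolution (k + 1) φ v) (Φ : ShootingFamily k g U V)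
    (H : BistableNonlinearity g G L b c) (hφg : EqOn φ g (Icc 0 c)) (hφ : ∀ z, c < z → φ z < 0) :
    GroundState k g c (U (v 0)) (V (v 0)) := by
  have heq := h.eqOn_shooting Φ H hφg hφ
  obtain ⟨-, hpos, -, -, hlim⟩ := id h
  refine Φ.groundState_of_notMem H (hpos 0 le_rfl) (h.initial_lt Φ H hφg hφ) ?_ ?_
  · rintro ⟨r, hr, hneg⟩
    exact (hpos r hr).not_gt (heq hr ▸ hneg)
  · rintro ⟨r, hr, henergy, -⟩
    have hG : Tendsto (fun s => G (v s)) atTop (𝓝 0) :=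
      H.primitive_zero ▸ (H.continuous_primitive.tendsto 0).comp hlim
    refine henergy.not_ge (le_of_tendsto hG ((eventually_ge_atTop r).mono fun s hs => ?_))
    calc G (v s) ≤ radialEnergy G (U (v 0)) (V (v 0)) s := by
          rw [heq (hr.trans hs)]
          exact le_add_of_nonneg_left (by positivity)
      _ ≤ radialEnergy G (U (v 0)) (V (v 0)) r :=
          (Φ.solution _).energy_le H.hasDerivAt_primitive hr hs

end IsPositiveSolution

lemma exists_shootingFamily {g : ℝ → ℝ} {L : ℝ≥0} (hg : LipschitzWith L g) (k : ℕ) :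
    ∃ U V, ShootingFamily k g U V := by
  choose U V hUV using exists_radialSolution k (N := fun _ z => g z)
    (hg.continuous.comp continuous_snd) (fun _ => hg) (fun _ => le_rfl)
  exact ⟨U, V, fun α => (hUV α).1, fun α => (hUV α).2⟩

theorem CrossingNonlinearity.exists_unique_isPositiveSolution {g g' G φ : ℝ → ℝ} {L : ℝ≥0}
    {b c δ m : ℝ} (H : CrossingNonlinearity g g' G L b c δ m) (k : ℕ) (hφg : EqOn φ g (Icc 0 c))
    (hφ : ∀ z, c < z → φ z < 0) :
    ∃ u, IsPositiveSolution (k + 1) φ u ∧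
      ∀ v, IsPositiveSolution (k + 1) φ v → EqOn v u (Ici 0) := by
  have B := H.toBistableNonlinearity
  obtain ⟨U, V, Φ⟩ := exists_shootingFamily H.lipschitz k
  obtain ⟨α, W⟩ := Φ.exists_groundState B
  have heq : EqOn (fun r => φ (U α r)) (fun r => g (U α r)) (Ici 0) := fun r hr =>
    hφg (Ioo_subset_Icc_self (W.mem_Ioo hr))
  refine ⟨U α, (W.congr_source fun r hr => (heq hr.le).symm).isPositiveSolution
    ((H.lipschitz.continuous.comp_continuousOn W.continuousOn).congr heq) W.pos W.tendsto,
    fun v hv => ?_⟩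
  rw [← Φ.groundState_unique H (hv.groundState Φ B hφg hφ) W]
  exact hv.eqOn_shooting Φ B hφg hφ

/-! ### Real trinomials -/

section Trinomial

variable {a d A B C s t e : ℝ}

lemma rpow_mul_rpow_lt (had : a < d) (hs : 0 < s) (hst : s < t) :
    t ^ a * s ^ d < s ^ a * t ^ d := by
  have ht := hs.trans hst
  have hsplit : ∀ u : ℝ, 0 < u → u ^ d = u ^ a * u ^ (d - a) := fun u hu => by
    rw [← Real.rpow_add hu, add_sub_cancel]
  calc t ^ a * s ^ d = s ^ a * t ^ a * s ^ (d - a) := by rw [hsplit s hs]; ring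
    _ < s ^ a * t ^ a * t ^ (d - a) :=
        mul_lt_mul_of_pos_left (Real.rpow_lt_rpow hs.le hst (sub_pos.2 had)) (by positivity)
    _ = s ^ a * t ^ d := by rw [hsplit t ht]; ring

lemma mul_rpow_lt_mul_rpow_of_le (had : a < d) (hB : 0 < B) (hs : 0 < s) (hst : s < t)
    (h : A * s ^ a ≤ B * s ^ d) : A * t ^ a < B * t ^ d := by
  have hsa := Real.rpow_pos_of_pos hs a
  have hta := Real.rpow_pos_of_pos (hs.trans hst) a
  refine lt_of_mul_lt_mul_left ?_ hsa.le
  calc s ^ a * (A * t ^ a) = t ^ a * (A * s ^ a) := by ring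
    _ ≤ t ^ a * (B * s ^ d) := mul_le_mul_of_nonneg_left h hta.le
    _ = B * (t ^ a * s ^ d) := by ring
    _ < B * (s ^ a * t ^ d) := mul_lt_mul_of_pos_left (rpow_mul_rpow_lt had hs hst) hB
    _ = s ^ a * (B * t ^ d) := by ring

lemma trinomial_neg_of_nonpos_left (ha : 0 < a) (had : a < d) (hC : 0 < C) (hB : B ≤ 0)
    (hs : 0 < s) (hst : s < t) (h : C - A * s ^ a + B * s ^ d ≤ 0) :
    C - A * t ^ a + B * t ^ d < 0 := by
  have hpow := Real.rpow_lt_rpow hs.le hst ha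
  have hmixed := mul_le_mul_of_nonpos_left (rpow_mul_rpow_lt had hs hst).le hB
  have hC' := mul_lt_mul_of_pos_left hpow hC
  have h' := mul_nonpos_of_nonneg_of_nonpos (Real.rpow_nonneg (hs.trans hst).le a) h
  refine neg_of_mul_neg_right (a := s ^ a) ?_ (Real.rpow_nonneg hs.le a)
  linarith

/-- In the variable `u ^ a` the trinomial is strictly convex. -/
lemma trinomial_neg_of_nonpos_ends (ha : 0 < a) (had : a < d) (hB : 0 < B) (hs : 0 < s)
    (hst : s < t) (hte : t < e) (h₁ : C - A * s ^ a + B * s ^ d ≤ 0)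
    (h₂ : C - A * e ^ a + B * e ^ d ≤ 0) : C - A * t ^ a + B * t ^ d < 0 := by
  have ht := hs.trans hst
  have he := ht.trans hte
  have hpow : ∀ u : ℝ, 0 < u → (u ^ a) ^ (d / a) = u ^ d := fun u hu => by
    rw [← Real.rpow_mul hu.le, mul_div_cancel₀ _ ha.ne']
  have hst' := sub_pos.2 (Real.rpow_lt_rpow hs.le hst ha)
  have hte' := sub_pos.2 (Real.rpow_lt_rpow ht.le hte ha)
  have hslope := (strictConvexOn_rpow ((one_lt_div ha).2 had)).slope_strict_mono_adjacent
    (Real.rpow_nonneg hs.le a) (Real.rpow_nonneg he.le a) (sub_pos.1 hst') (sub_pos.1 hte')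
  rw [hpow s hs, hpow t ht, hpow e he, div_lt_div_iff₀ hst' hte'] at hslope
  have hconvex := mul_lt_mul_of_pos_left hslope hB
  have hleft := mul_nonpos_of_nonneg_of_nonpos hte'.le h₁
  have hright := mul_nonpos_of_nonneg_of_nonpos hst'.le h₂
  refine neg_of_mul_neg_right (a := e ^ a - s ^ a) ?_ (by linarith)
  linarith

lemma trinomial_neg (ha : 0 < a) (had : a < d) (hC : 0 < C) (hs : 0 < s) (hst : s < t)
    (hte : t < e) (h₁ : C - A * s ^ a + B * s ^ d ≤ 0) (h₂ : C - A * e ^ a + B * e ^ d ≤ 0) :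
    C - A * t ^ a + B * t ^ d < 0 :=
  (le_or_gt B 0).elim (fun hB => trinomial_neg_of_nonpos_left ha had hC hB hs hst h₁)
    fun hB => trinomial_neg_of_nonpos_ends ha had hB hs hst hte h₁ h₂

end Trinomial

/-! ### The double power nonlinearity -/

/-- The quotient `f(u)/u`. -/
noncomputable def quotient (ω p q u : ℝ) : ℝ := -ω + u ^ (p - 1) - u ^ (q - 1)

/-- The derivative of `f`. -/
noncomputable def doublePowerDeriv (ω p q u : ℝ) : ℝ := -ω + p * u ^ (p - 1) - q * u ^ (q - 1)

/-- The derivative `u (f(u)/u)'` of the quotient `f(u)/u` with respect to `log u`. -/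
noncomputable def quotientSlope (p q u : ℝ) : ℝ := (p - 1) * u ^ (p - 1) - (q - 1) * u ^ (q - 1)

section DoublePower

variable {ω p q u s t e : ℝ}

lemma f_eq (hu : 0 < u) : f ω p q u = u * quotient ω p q u := by
  simp only [f, quotient, Real.rpow_sub_one hu.ne']
  field_simp

lemma F_eq (hu : 0 < u) : F ω p q u =
    u ^ 2 * (-ω / 2 + u ^ (p - 1) / (p + 1) - u ^ (q - 1) / (q + 1)) := by
  simp only [F, Real.rpow_sub_one hu.ne', Real.rpow_add_one hu.ne']
  field_simp

lemma mul_deriv_sub_f_eq (hu : 0 < u) :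
    u * doublePowerDeriv ω p q u - f ω p q u = u * quotientSlope p q u := by
  rw [f_eq hu, doublePowerDeriv, quotient, quotientSlope]
  ring

lemma f_zero (hp : p ≠ 0) (hq : q ≠ 0) : f ω p q 0 = 0 := by
  simp [f, Real.zero_rpow hp, Real.zero_rpow hq]

lemma F_zero (hp : p + 1 ≠ 0) (hq : q + 1 ≠ 0) : F ω p q 0 = 0 := by
  simp [F, Real.zero_rpow hp, Real.zero_rpow hq]

lemma quotient_zero (hp : 1 < p) (hq : 1 < q) : quotient ω p q 0 = -ω := by
  simp [quotient, Real.zero_rpow (sub_pos.2 hp).ne', Real.zero_rpow (sub_pos.2 hq).ne']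

lemma hasDerivAt_f (hp : 1 ≤ p) (hq : 1 ≤ q) (u : ℝ) :
    HasDerivAt (f ω p q) (doublePowerDeriv ω p q u) u :=
  ((((hasDerivAt_id u).const_mul (-ω)).add (Real.hasDerivAt_rpow_const (Or.inr hp))).sub
    (Real.hasDerivAt_rpow_const (Or.inr hq))).congr_deriv (by simp [doublePowerDeriv])

lemma hasDerivAt_F (hp : 0 ≤ p) (hq : 0 ≤ q) (u : ℝ) : HasDerivAt (F ω p q) (f ω p q u) u := by
  have hpow : ∀ s : ℝ, 0 ≤ s → HasDerivAt (fun u => u ^ (s + 1) / (s + 1)) (u ^ s) u :=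
    fun s hs => ((Real.hasDerivAt_rpow_const (p := s + 1) (Or.inr (by linarith))).div_const
      (s + 1)).congr_deriv (by rw [add_sub_cancel_right]; field_simp)
  refine ((((hasDerivAt_pow 2 u).const_mul (-ω)).div_const 2).add (hpow p hp)).sub (hpow q hq)
    |>.congr_deriv ?_
  simp only [f]
  ring

lemma continuous_F (hp : 0 ≤ p) (hq : 0 ≤ q) : Continuous (F ω p q) :=
  continuous_iff_continuousAt.2 fun u => (hasDerivAt_F hp hq u).continuousAt

lemma continuous_doublePowerDeriv (hp : 1 ≤ p) (hq : 1 ≤ q) :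
    Continuous (doublePowerDeriv ω p q) :=
  (continuous_const.add ((Real.continuous_rpow_const (sub_nonneg.2 hp)).const_mul p)).sub
    ((Real.continuous_rpow_const (sub_nonneg.2 hq)).const_mul q)

lemma continuous_quotient (hp : 1 ≤ p) (hq : 1 ≤ q) : Continuous (quotient ω p q) :=
  (continuous_const.add (Real.continuous_rpow_const (sub_nonneg.2 hp))).sub
    (Real.continuous_rpow_const (sub_nonneg.2 hq))

lemma hasDerivAt_quotient (hu : 0 < u) :
    HasDerivAt (quotient ω p q) (quotientSlope p q u / u) u := by
  refine (((Real.hasDerivAt_rpow_const (Or.inl hu.ne')).const_add (-ω)).sub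
    (Real.hasDerivAt_rpow_const (Or.inl hu.ne'))).congr_deriv ?_
  rw [quotientSlope, Real.rpow_sub_one hu.ne' (p - 1), Real.rpow_sub_one hu.ne' (q - 1)]
  ring

lemma abs_doublePowerDeriv_le (hω : 0 ≤ ω) (hp : 1 ≤ p) (hq : 1 ≤ q) (hu : u ∈ Icc 0 1) :
    |doublePowerDeriv ω p q u| ≤ ω + p + q := by
  have hpow : ∀ s : ℝ, 1 ≤ s → 0 ≤ s * u ^ (s - 1) ∧ s * u ^ (s - 1) ≤ s := fun s hs =>
    ⟨mul_nonneg (by linarith) (Real.rpow_nonneg hu.1 _),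
      mul_le_of_le_one_right (by linarith) (Real.rpow_le_one hu.1 hu.2 (sub_nonneg.2 hs))⟩
  obtain ⟨hp₀, hp₁⟩ := hpow p hp
  obtain ⟨hq₀, hq₁⟩ := hpow q hq
  rw [doublePowerDeriv, abs_le]
  constructor <;> linarith

lemma quotient_neg_of_one_le (hω : 0 < ω) (hpq : p ≤ q) (hu : 1 ≤ u) : quotient ω p q u < 0 := by
  have := Real.rpow_le_rpow_of_exponent_le hu (sub_le_sub_right hpq 1)
  rw [quotient]
  linarith

lemma quotientSlope_neg_of_nonpos (hpq : p < q) (hq : 1 < q) (hs : 0 < s) (hst : s < t)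
    (h : quotientSlope p q s ≤ 0) : quotientSlope p q t < 0 :=
  sub_neg.2 (mul_rpow_lt_mul_rpow_of_le (sub_lt_sub_right hpq 1) (sub_pos.2 hq) hs hst
    (sub_nonpos.1 h))

lemma quotient_pos_of_nonneg_ends (hω : 0 < ω) (hp : 1 < p) (hpq : p < q) (hs : 0 < s)
    (hst : s < t) (hte : t < e) (h₁ : 0 ≤ quotient ω p q s) (h₂ : 0 ≤ quotient ω p q e) :
    0 < quotient ω p q t := by
  have := trinomial_neg (A := 1) (B := 1) (sub_pos.2 hp) (sub_lt_sub_right hpq 1) hω hs hst hte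
    (by rw [quotient] at h₁; linarith) (by rw [quotient] at h₂; linarith)
  rw [quotient]
  linarith

lemma two_mul_F_lt (hp : 1 < p) (hpq : p < q) (hu : 0 < u) (h : 0 ≤ quotientSlope p q u) :
    2 * F ω p q u < u * f ω p q u := by
  have hident : u * f ω p q u - 2 * F ω p q u = u ^ 2 *
      ((p - 1) * u ^ (p - 1) / (p + 1) - (q - 1) * u ^ (q - 1) / (q + 1)) := by
    have hp1 : p + 1 ≠ 0 := by linarith
    have hq1 : q + 1 ≠ 0 := by linarith
    rw [f_eq hu, F_eq hu, quotient]
    field_simp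
    ring
  have hq : 0 < (q - 1) * u ^ (q - 1) :=
    mul_pos (by linarith) (Real.rpow_pos_of_pos hu _)
  have hlt : (q - 1) * u ^ (q - 1) / (q + 1) < (p - 1) * u ^ (p - 1) / (p + 1) :=
    calc (q - 1) * u ^ (q - 1) / (q + 1) < (q - 1) * u ^ (q - 1) / (p + 1) :=
          div_lt_div_of_pos_left hq (by linarith) (by linarith)
      _ ≤ (p - 1) * u ^ (p - 1) / (p + 1) :=
          div_le_div_of_nonneg_right (sub_nonneg.1 h) (by linarith)
  exact sub_pos.1 (hident ▸ mul_pos (pow_pos hu 2) (sub_pos.2 hlt))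

lemma exists_forall_doublePowerDeriv_le {b : ℝ} (hω : 0 < ω) (hp : 1 < p) (hq : 0 ≤ q)
    (hb : 0 < b) : ∃ δ ∈ Ioo 0 b, ∀ u ∈ Ioc 0 δ, doublePowerDeriv ω p q u ≤ -√(ω / 2) ^ 2 := by
  have hp' := sub_pos.2 hp
  have hlim : Tendsto (fun u : ℝ => p * u ^ (p - 1)) (𝓝[>] 0) (𝓝 0) := by
    have := ((Real.continuous_rpow_const hp'.le).const_mul p).tendsto 0
    rw [Real.zero_rpow hp'.ne', mul_zero] at this
    exact this.mono_left nhdsWithin_le_nhds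
  obtain ⟨δ, hδ, hmem⟩ :=
    ((hlim.eventually (gt_mem_nhds (half_pos hω))).and (Ioo_mem_nhdsGT hb)).exists
  refine ⟨δ, hmem, fun u hu => ?_⟩
  have hmono : p * u ^ (p - 1) ≤ p * δ ^ (p - 1) := mul_le_mul_of_nonneg_left
    (Real.rpow_le_rpow hu.1.le hu.2 hp'.le) (by linarith)
  have hpos := mul_nonneg hq (Real.rpow_nonneg hu.1.le (q - 1))
  rw [doublePowerDeriv, Real.sq_sqrt (half_pos hω).le]
  linarith

lemma exists_f_pos_of_F_pos (hp : 0 ≤ p) (hq : 0 ≤ q) (hu : 0 < u) (hF : 0 < F ω p q u) :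
    ∃ z ∈ Ioo 0 u, 0 < f ω p q z := by
  by_contra! hnonpos
  have := le_of_hasDerivAt_nonpos hu.le (continuous_F hp hq).continuousOn
    (fun t _ => hasDerivAt_F hp hq t) hnonpos
  rw [F_zero (by linarith) (by linarith)] at this
  exact this.not_gt hF

lemma exists_critical_F_pos (hω : 0 < ω) (hp : 0 ≤ p) (hpq : p ≤ q)
    (hF : ∃ u, 0 < u ∧ 0 < F ω p q u) : ∃ c, 0 < c ∧ f ω p q c = 0 ∧ 0 < F ω p q c := by
  obtain ⟨u, hu, hFu⟩ := hF
  have hq := hp.trans hpq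
  have hcont := continuous_F (ω := ω) hp hq
  obtain ⟨c, hc, hmax⟩ := isCompact_Icc.exists_isMaxOn
    (nonempty_Icc.2 (hu.le.trans (le_max_left u 2))) hcont.continuousOn
  have hFc : 0 < F ω p q c := hFu.trans_le (hmax ⟨hu.le, le_max_left _ _⟩)
  have hc0 : 0 < c := hc.1.lt_of_ne fun h0 => by
    rw [← h0, F_zero (by linarith) (by linarith)] at hFc
    exact hFc.false
  have hc1 : c ≤ 1 := by
    by_contra! h1
    have hlt := lt_of_hasDerivAt_neg h1 hcont.continuousOn (fun t _ => hasDerivAt_F hp hq t)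
      fun t ht => by
        rw [f_eq (zero_lt_one.trans ht.1)]
        exact mul_neg_of_pos_of_neg (zero_lt_one.trans ht.1)
          (quotient_neg_of_one_le hω hpq ht.1.le)
    exact hlt.not_ge (hmax ⟨zero_le_one, one_le_two.trans (le_max_right _ _)⟩)
  have hcM : c < max u 2 := by
    linarith [le_max_right u 2]
  exact ⟨c, hc0,
    (hmax.isLocalMax (Icc_mem_nhds hc0 hcM)).hasDerivAt_eq_zero (hasDerivAt_F hp hq c), hFc⟩

end DoublePower

/-- The double power nonlinearity has the two positive zeros `b < c`, and its primitive is positive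
at `c`. -/
structure DoublePowerWell (ω p q b c : ℝ) : Prop where
  ω_pos : 0 < ω
  one_lt : 1 < p
  lt : p < q
  b_pos : 0 < b
  b_lt_c : b < c
  quotient_left : quotient ω p q b = 0
  quotient_right : quotient ω p q c = 0
  primitive_pos : 0 < F ω p q c

lemma exists_doublePowerWell {ω p q : ℝ} (hω : 0 < ω) (hp : 1 < p) (hpq : p < q)
    (hF : ∃ u, 0 < u ∧ 0 < F ω p q u) : ∃ b c, DoublePowerWell ω p q b c := by
  have hp0 : 0 ≤ p := by linarith
  obtain ⟨c, hc, hfc, hFc⟩ := exists_critical_F_pos hω hp0 hpq.le hF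
  obtain ⟨z, hz, hfz⟩ := exists_f_pos_of_F_pos hp0 (hp0.trans hpq.le) hc hFc
  rw [f_eq hz.1] at hfz
  rw [f_eq hc] at hfc
  obtain ⟨b, hb, hQb, -⟩ := exists_first_zero hz.1.le
    (continuous_quotient (ω := ω) hp.le (hp.trans hpq).le).continuousOn
    (by rwa [quotient_zero hp (hp.trans hpq), neg_lt_zero])
    (pos_of_mul_pos_right hfz hz.1.le).le
  exact ⟨b, c, hω, hp, hpq, hb.1, hb.2.trans_lt hz.2, hQb,
    (mul_eq_zero.1 hfc).resolve_left hc.ne', hFc⟩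

section Identities

variable {ω p q u : ℝ}

lemma linearizedSource_f (l : ℝ) (hu : 0 < u) :
    linearizedSource (f ω p q) (doublePowerDeriv ω p q) l u =
      u * (2 * ω - (2 - l * (p - 1)) * u ^ (p - 1) + (2 - l * (q - 1)) * u ^ (q - 1)) := by
  rw [linearizedSource, mul_deriv_sub_f_eq hu, f_eq hu, quotientSlope, quotient]
  ring

lemma pohozaevDensity_f (k : ℕ) (hp : p + 1 ≠ 0) (hq : q + 1 ≠ 0) (hu : 0 < u) :
    pohozaevDensity k (f ω p q) (F ω p q) u =
      -(u ^ 2 * (ω - ((k + 1) / (p + 1) - (k - 1) / 2) * u ^ (p - 1) +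
        ((k + 1) / (q + 1) - (k - 1) / 2) * u ^ (q - 1))) := by
  rw [pohozaevDensity, F_eq hu, f_eq hu, quotient]
  field_simp
  ring

lemma quotient_lt_quotient {s t : ℝ} (hp : 1 ≤ p) (hq : 1 ≤ q) (hs : 0 < s) (hst : s < t)
    (h : ∀ u ∈ Ioo s t, quotientSlope p q u < 0) : quotient ω p q t < quotient ω p q s :=
  lt_of_hasDerivAt_neg hst (continuous_quotient hp hq).continuousOn
    (fun _ hu => hasDerivAt_quotient (hs.trans hu.1))
    fun u hu => div_neg_of_neg_of_pos (h u hu) (hs.trans hu.1)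

end Identities

/-- The nonlinearity `f`, with its argument clamped to `[0, c]`. For `c` the largest zero of `f`
this turns `f` into a globally Lipschitz function without affecting solutions with values in
`[0, c]`. -/
noncomputable def truncatedNonlinearity (ω p q c x : ℝ) : ℝ := f ω p q (max 0 (min x c))

/-- The primitive of the truncated nonlinearity that vanishes at `0`. -/
noncomputable def truncatedPrimitive (ω p q c x : ℝ) : ℝ :=
  ∫ t in (0 : ℝ)..x, truncatedNonlinearity ω p q c t

section Truncation

variable {ω p q c x : ℝ}

lemma truncatedNonlinearity_eqOn : EqOn (truncatedNonlinearity ω p q c) (f ω p q) (Icc 0 c) :=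
  fun x hx => by rw [truncatedNonlinearity, min_eq_left hx.2, max_eq_right hx.1]

lemma truncatedNonlinearity_of_nonpos (hp : p ≠ 0) (hq : q ≠ 0) (hx : x ≤ 0) :
    truncatedNonlinearity ω p q c x = 0 := by
  rw [truncatedNonlinearity, max_eq_left ((min_le_left x c).trans hx), f_zero hp hq]

lemma lipschitzWith_truncatedNonlinearity (hω : 0 ≤ ω) (hp : 1 ≤ p) (hq : 1 ≤ q) (hc : 0 ≤ c)
    (hc1 : c ≤ 1) : LipschitzWith (ω + p + q).toNNReal (truncatedNonlinearity ω p q c) := by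
  have hf : LipschitzOnWith (ω + p + q).toNNReal (f ω p q) (Icc 0 c) :=
    (convex_Icc 0 c).lipschitzOnWith_of_nnnorm_hasDerivWithin_le
      (fun u _ => (hasDerivAt_f hp hq u).hasDerivWithinAt) fun u hu => by
        rw [Real.le_toNNReal_iff_coe_le (by linarith), coe_nnnorm, Real.norm_eq_abs]
        exact abs_doublePowerDeriv_le hω hp hq ⟨hu.1, hu.2.trans hc1⟩
  refine LipschitzWith.of_dist_le_mul fun x y => ?_
  have hclamp : LipschitzWith 1 fun x : ℝ => max 0 (min x c) :=
    (LipschitzWith.id.min_const c).const_max 0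
  have hmem : ∀ x : ℝ, max 0 (min x c) ∈ Icc 0 c := fun x =>
    ⟨le_max_left _ _, max_le hc (min_le_right _ _)⟩
  exact (hf.dist_le_mul _ (hmem x) _ (hmem y)).trans
    (mul_le_mul_of_nonneg_left (by simpa using hclamp.dist_le_mul x y) NNReal.zero_le_coe)

lemma hasDerivAt_truncatedPrimitive (h : Continuous (truncatedNonlinearity ω p q c)) (x : ℝ) :
    HasDerivAt (truncatedPrimitive ω p q c) (truncatedNonlinearity ω p q c x) x :=
  (h.integral_hasStrictDerivAt 0 x).hasDerivAt

lemma truncatedPrimitive_zero : truncatedPrimitive ω p q c 0 = 0 :=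
  intervalIntegral.integral_same

lemma truncatedPrimitive_eqOn (hp : 0 ≤ p) (hq : 0 ≤ q) :
    EqOn (truncatedPrimitive ω p q c) (F ω p q) (Icc 0 c) := fun x hx => by
  have hcongr : EqOn (truncatedNonlinearity ω p q c) (f ω p q) (uIcc 0 x) :=
    uIcc_of_le hx.1 ▸ truncatedNonlinearity_eqOn.mono (Icc_subset_Icc_right hx.2)
  have hcont : Continuous (f ω p q) :=
    ((continuous_const.mul continuous_id).add (Real.continuous_rpow_const hp)).sub
      (Real.continuous_rpow_const hq)
  rw [truncatedPrimitive, intervalIntegral.integral_congr hcongr,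
    intervalIntegral.integral_eq_sub_of_hasDerivAt (fun t _ => hasDerivAt_F hp hq t)
      (hcont.intervalIntegrable 0 x), F_zero (by linarith) (by linarith), sub_zero]

end Truncation

namespace DoublePowerWell

variable {ω p q b c s t u : ℝ}

lemma c_pos (W : DoublePowerWell ω p q b c) : 0 < c := W.b_pos.trans W.b_lt_c

lemma one_lt_right (W : DoublePowerWell ω p q b c) : 1 < q := W.one_lt.trans W.lt

lemma quotient_pos (W : DoublePowerWell ω p q b c) (hu : u ∈ Ioo b c) : 0 < quotient ω p q u :=
  quotient_pos_of_nonneg_ends W.ω_pos W.one_lt W.lt W.b_pos hu.1 hu.2 W.quotient_left.ge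
    W.quotient_right.ge

lemma quotient_neg_left (W : DoublePowerWell ω p q b c) (hu : u ∈ Ioo 0 b) :
    quotient ω p q u < 0 := by
  by_contra! h
  exact (quotient_pos_of_nonneg_ends W.ω_pos W.one_lt W.lt hu.1 hu.2 W.b_lt_c h
    W.quotient_right.ge).ne' W.quotient_left

lemma quotient_neg_right (W : DoublePowerWell ω p q b c) (hu : c < u) :
    quotient ω p q u < 0 := by
  by_contra! h
  exact (quotient_pos_of_nonneg_ends W.ω_pos W.one_lt W.lt W.b_pos W.b_lt_c hu W.quotient_left.ge
    h).ne' W.quotient_right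

lemma f_neg_of_lt (W : DoublePowerWell ω p q b c) (hu : c < u) : f ω p q u < 0 :=
  f_eq (W.c_pos.trans hu) ▸ mul_neg_of_pos_of_neg (W.c_pos.trans hu) (W.quotient_neg_right hu)

lemma le_one (W : DoublePowerWell ω p q b c) : c ≤ 1 := by
  by_contra! h
  exact (quotient_neg_of_one_le W.ω_pos W.lt.le h.le).ne W.quotient_right

lemma quotientSlope_right_neg (W : DoublePowerWell ω p q b c) : quotientSlope p q c < 0 := by
  by_contra! h
  have hslope : ∀ t ∈ Ioo b c, 0 < quotientSlope p q t / t := fun t ht => by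
    have ht0 := W.b_pos.trans ht.1
    refine div_pos ?_ ht0
    by_contra! hneg
    exact (quotientSlope_neg_of_nonpos W.lt W.one_lt_right ht0 ht.2 hneg).not_ge h
  have hlt := lt_of_hasDerivAt_pos W.b_lt_c
    (continuous_quotient (ω := ω) W.one_lt.le W.one_lt_right.le).continuousOn
    (fun t ht => hasDerivAt_quotient (W.b_pos.trans ht.1)) hslope
  exact hlt.ne (W.quotient_left.trans W.quotient_right.symm)

lemma linearizedSource_neg (W : DoublePowerWell ω p q b c) {l : ℝ} (hl : 0 < l) (hs : 0 < s)
    (hst : s < t) (htc : t < c)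
    (h : linearizedSource (f ω p q) (doublePowerDeriv ω p q) l s ≤ 0) :
    linearizedSource (f ω p q) (doublePowerDeriv ω p q) l t < 0 := by
  have hend : 2 * ω - (2 - l * (p - 1)) * c ^ (p - 1) + (2 - l * (q - 1)) * c ^ (q - 1) ≤ 0 :=
    calc _ = l * quotientSlope p q c - 2 * quotient ω p q c := by
          rw [quotientSlope, quotient]
          ring
      _ ≤ 0 := by
          rw [W.quotient_right, mul_zero, sub_zero]
          exact (mul_neg_of_pos_of_neg hl W.quotientSlope_right_neg).le
  rw [linearizedSource_f l hs] at h
  rw [linearizedSource_f l (hs.trans hst)]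
  exact mul_neg_of_pos_of_neg (hs.trans hst) (trinomial_neg (sub_pos.2 W.one_lt)
    (sub_lt_sub_right W.lt 1) (mul_pos two_pos W.ω_pos) hs hst htc
    (nonpos_of_mul_nonpos_right h hs) hend)

lemma pohozaevDensity_pos (W : DoublePowerWell ω p q b c) (k : ℕ) (hs : 0 < s) (hst : s < t)
    (htc : t < c) (h : 0 ≤ pohozaevDensity k (f ω p q) (F ω p q) s) :
    0 < pohozaevDensity k (f ω p q) (F ω p q) t := by
  have hp : p + 1 ≠ 0 := by linarith [W.one_lt]
  have hq : q + 1 ≠ 0 := by linarith [W.one_lt_right]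
  have hend : 0 ≤ pohozaevDensity k (f ω p q) (F ω p q) c := by
    rw [pohozaevDensity, f_eq W.c_pos, W.quotient_right, mul_zero, mul_zero, mul_zero, sub_zero]
    exact mul_nonneg (by positivity) W.primitive_pos.le
  rw [pohozaevDensity_f k hp hq hs, neg_nonneg] at h
  rw [pohozaevDensity_f k hp hq W.c_pos, neg_nonneg] at hend
  rw [pohozaevDensity_f k hp hq (hs.trans hst), neg_pos]
  exact mul_neg_of_pos_of_neg (pow_pos (hs.trans hst) 2) (trinomial_neg (sub_pos.2 W.one_lt)
    (sub_lt_sub_right W.lt 1) W.ω_pos hs hst htc (nonpos_of_mul_nonpos_right h (pow_pos hs 2))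
    (nonpos_of_mul_nonpos_right hend (pow_pos W.c_pos 2)))

lemma two_mul_F_lt_or_sublinear (W : DoublePowerWell ω p q b c) (hu : 0 < u) :
    2 * F ω p q u < u * f ω p q u ∨
      ∀ t ∈ Ico u c, t * doublePowerDeriv ω p q t - f ω p q t < 0 ∧ 0 < f ω p q t := by
  rcases le_or_gt 0 (quotientSlope p q u) with h | h
  · exact Or.inl (two_mul_F_lt W.one_lt W.lt hu h)
  refine Or.inr fun t ht => ?_
  have hslope : ∀ s, u ≤ s → quotientSlope p q s < 0 := fun s hs => hs.eq_or_lt.elim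
    (fun heq => heq ▸ h) fun hlt => quotientSlope_neg_of_nonpos W.lt W.one_lt_right hu hlt h.le
  have ht0 : 0 < t := hu.trans_le ht.1
  have hpos : 0 < quotient ω p q t := W.quotient_right ▸
    quotient_lt_quotient W.one_lt.le W.one_lt_right.le ht0 ht.2 fun s hs =>
      hslope s (ht.1.trans hs.1.le)
  rw [mul_deriv_sub_f_eq ht0, f_eq ht0]
  exact ⟨mul_neg_of_pos_of_neg ht0 (hslope t ht.1), mul_pos ht0 hpos⟩

lemma bistableNonlinearity (W : DoublePowerWell ω p q b c) :
    BistableNonlinearity (truncatedNonlinearity ω p q c) (truncatedPrimitive ω p q c)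
      (ω + p + q).toNNReal b c := by
  have hp : 0 < p := by linarith [W.one_lt]
  have hq : 0 < q := hp.trans W.lt
  have hlip := lipschitzWith_truncatedNonlinearity W.ω_pos.le W.one_lt.le W.one_lt_right.le
    W.c_pos.le W.le_one
  have hval : ∀ u ∈ Ioc 0 c, truncatedNonlinearity ω p q c u = u * quotient ω p q u :=
    fun u hu => (truncatedNonlinearity_eqOn (Ioc_subset_Icc_self hu)).trans (f_eq hu.1)
  exact
  { b_pos := W.b_pos
    b_lt_c := W.b_lt_c
    lipschitz := hlip
    hasDerivAt_primitive := hasDerivAt_truncatedPrimitive hlip.continuous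
    primitive_zero := truncatedPrimitive_zero
    eq_zero_of_nonpos := fun x hx => truncatedNonlinearity_of_nonpos hp.ne' hq.ne' hx
    eq_zero_right := by rw [hval c ⟨W.c_pos, le_rfl⟩, W.quotient_right, mul_zero]
    neg := fun x hx => by
      rw [hval x ⟨hx.1, (hx.2.trans W.b_lt_c).le⟩]
      exact mul_neg_of_pos_of_neg hx.1 (W.quotient_neg_left hx)
    pos := fun x hx => by
      rw [hval x ⟨W.b_pos.trans hx.1, hx.2.le⟩]
      exact mul_pos (W.b_pos.trans hx.1) (W.quotient_pos hx)
    primitive_pos := by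
      rw [truncatedPrimitive_eqOn hp.le hq.le ⟨W.c_pos.le, le_rfl⟩]
      exact W.primitive_pos }

lemma exists_crossingNonlinearity (W : DoublePowerWell ω p q b c) :
    ∃ δ, CrossingNonlinearity (truncatedNonlinearity ω p q c) (doublePowerDeriv ω p q)
      (truncatedPrimitive ω p q c) (ω + p + q).toNNReal b c δ √(ω / 2) := by
  have hp := W.one_lt
  have hq := W.one_lt_right
  obtain ⟨δ, hδ, hderiv⟩ := exists_forall_doublePowerDeriv_le W.ω_pos hp (by linarith) W.b_pos
  have hg : ∀ u, 0 < u → u < c → truncatedNonlinearity ω p q c u = f ω p q u :=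
    fun u hu huc => truncatedNonlinearity_eqOn ⟨hu.le, huc.le⟩
  have hG : ∀ u, 0 < u → u < c → truncatedPrimitive ω p q c u = F ω p q u :=
    fun u hu huc => truncatedPrimitive_eqOn (by linarith) (by linarith) ⟨hu.le, huc.le⟩
  refine ⟨δ, { W.bistableNonlinearity with
    hasDerivAt := fun x hx => (hasDerivAt_f hp.le hq.le x).congr_of_eventuallyEq
      (truncatedNonlinearity_eqOn.eventuallyEq_of_mem (Icc_mem_nhds hx.1 hx.2))
    continuousOn_deriv := (continuous_doublePowerDeriv hp.le hq.le).continuousOn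
    δ_pos := hδ.1
    δ_lt := hδ.2
    m_pos := Real.sqrt_pos.2 (half_pos W.ω_pos)
    deriv_le := hderiv
    linearizedSource_crossing := fun l s t hl hs hst htc h => ?_
    pohozaevDensity_crossing := fun k s t hs hst htc h => ?_
    superquadratic_or_sublinear := fun u hu => ?_ }⟩
  · rw [linearizedSource, hg s hs (hst.trans htc)] at h
    rw [linearizedSource, hg t (hs.trans hst) htc]
    exact W.linearizedSource_neg hl hs hst htc h
  · rw [pohozaevDensity, hg s hs (hst.trans htc), hG s hs (hst.trans htc)] at h
    rw [pohozaevDensity, hg t (hs.trans hst) htc, hG t (hs.trans hst) htc]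
    exact W.pohozaevDensity_pos k hs hst htc h
  · rw [hg u hu.1 hu.2, hG u hu.1 hu.2]
    refine (W.two_mul_F_lt_or_sublinear hu.1).imp_right fun h t ht => ?_
    rw [hg t (hu.1.trans_le ht.1) ht.2]
    exact h t ht

end DoublePowerWell

theorem existence_and_uniqueness (ω p q : ℝ) (hω : 0 < ω) (hp : 1 < p)
    (hpq : p < q) (n : ℕ) (hn : 1 ≤ n)
    (hF : ∃ u : ℝ, 0 < u ∧ 0 < F ω p q u) :
    ∃ u : ℝ → ℝ, IsPositiveSolution n (f ω p q) u ∧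
      ∀ v : ℝ → ℝ, IsPositiveSolution n (f ω p q) v →
        Set.EqOn v u (Set.Ici 0) := by
  obtain ⟨b, c, W⟩ := exists_doublePowerWell hω hp hpq hF
  obtain ⟨δ, H⟩ := W.exists_crossingNonlinearity
  obtain ⟨k, rfl⟩ := Nat.exists_eq_add_of_le' hn
  exact H.exists_unique_isPositiveSolution k truncatedNonlinearity_eqOn.symm
    fun _ hz => W.f_neg_of_lt hz
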